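/- arXiv:1603.06069 — 6 statements merged into one kernel-verified Lean document; each statement's English description precedes it below -/
import Mathlib

section
/- Let J₁ be a closed subinterval of (a₁,b₁) and suppose μ₁ is absolutely continuous in an open neighborhood of J₁ with density μ₁′ satisfying 0 < c ≤ μ₁′ ≤ M there. Then there exists a constant C > 0, independent of n, such that for all n ≥ 3 and all 2 ≤ j ≤ n − 1 with x_{j−1,2n}, x_{j+1,2n} ∈ J₁, one has x_{j+1,2n} − x_{j−1,2n} ≥ C/n. -/
open MeasureTheory

/-- The data of the diagonal type II multiple orthogonal polynomial for an
Angelesco system with two intervals: its `2n` zeros, listed in increasing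
order, with `n` of them in `(a₁,b₁)` and `n` of them in `(a₂,b₂)`, and the
multiple orthogonality conditions. -/
structure Angelesco (μ₁ μ₂ : Measure ℝ) (a₁ b₁ a₂ b₂ : ℝ) (n : ℕ) where
  x : Fin (2 * n) → ℝ
  mono : StrictMono x
  mem1 : ∀ i : Fin (2 * n), (i : ℕ) < n → x i ∈ Set.Ioo a₁ b₁
  mem2 : ∀ i : Fin (2 * n), n ≤ (i : ℕ) → x i ∈ Set.Ioo a₂ b₂
  orth1 : ∀ k < n, ∫ t, (∏ i, (t - x i)) * t ^ k ∂μ₁ = 0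
  orth2 : ∀ k < n, ∫ t, (∏ i, (t - x i)) * t ^ k ∂μ₂ = 0

/-- The quadrature weight `λ_{k,2n}^{(μ)} = ∫ ℓ_{k,2n} dμ`, where `ℓ_{k,2n}` is the
`k`-th fundamental Lagrange polynomial for the nodes `x_{1,2n} < ⋯ < x_{2n,2n}`. -/
noncomputable def qweight {μ₁ μ₂ : Measure ℝ} {a₁ b₁ a₂ b₂ : ℝ} {n : ℕ}
    (ad : Angelesco μ₁ μ₂ a₁ b₁ a₂ b₂ n) (μ : Measure ℝ) (k : Fin (2 * n)) : ℝ :=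
  ∫ t, (Lagrange.basis Finset.univ ad.x k).eval t ∂μ


lemma nik_rep (N : ℕ) : ∀ S : Polynomial ℝ, S.natDegree ≤ N → ∃ c : ℕ → ℝ, ∀ θ : ℝ,
    S.eval (Real.cos θ) * Real.sin θ = ∑ k ∈ Finset.range (N+1), c k * Real.sin ((k+1) * θ) := by
  induction N with
  | zero =>
    intro S hS
    refine ⟨fun _ => S.coeff 0, fun θ => ?_⟩
    rw [Polynomial.eq_C_of_natDegree_le_zero hS]
    simp
  | succ N ih =>
    intro S hS
    obtain ⟨c, hc⟩ := ih S.divX (by rw [Polynomial.natDegree_divX_eq_natDegree_tsub_one]; omega)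
    refine ⟨fun k => (if k = 0 then S.coeff 0 else c (k-1) / 2) + (if k + 1 < N + 1 then c (k+1) / 2 else 0), fun θ => ?_⟩
    have h1 : S.eval (Real.cos θ) = S.divX.eval (Real.cos θ) * Real.cos θ + S.coeff 0 := by
      conv_lhs => rw [← Polynomial.divX_mul_X_add S]
      simp
    rw [h1, add_mul, mul_right_comm, hc]
    simp only [add_mul]
    rw [Finset.sum_add_distrib]
    have h2 : ∑ k ∈ Finset.range (N+1+1), (if k = 0 then S.coeff 0 else c (k-1) / 2) * Real.sin (k*θ + 1 * θ)
        = ∑ k ∈ Finset.range (N+1), c k / 2 * Real.sin ((k+2) * θ) + S.coeff 0 * Real.sin θ := by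
      rw [Finset.sum_range_succ']
      simp
      refine Finset.sum_congr rfl fun k _ => ?_
      congr 2; ring
    have h3 : ∑ k ∈ Finset.range (N+1+1), (if k + 1 < N + 1 then c (k+1) / 2 else 0) * Real.sin (k*θ + 1 * θ)
        = ∑ k ∈ Finset.range (N+1), c k / 2 * Real.sin (k * θ) := by
      rw [Finset.sum_range_succ, Finset.sum_range_succ, Finset.sum_range_succ' _ N]
      simp
      refine Finset.sum_congr rfl fun k hk => ?_
      rw [if_pos (Finset.mem_range.1 hk)]
      congr 2; ring
    rw [h2, h3, add_right_comm, ← Finset.sum_add_distrib, Finset.sum_mul]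
    congr 1
    refine Finset.sum_congr rfl fun k _ => ?_
    have e1 : ((k:ℝ)+2) * θ = (k*θ+1*θ) + θ := by ring
    have e2 : (k:ℝ) * θ = (k*θ+1*θ) - θ := by ring
    have e3 := congrArg Real.sin e2
    rw [Real.sin_sub] at e3
    rw [e1, Real.sin_add (k*θ+1*θ) θ, e3]; ring

lemma cos_int (m : ℤ) (hm : m ≠ 0) : ∫ θ in (0:ℝ)..Real.pi, Real.cos (m * θ) = 0 := by
  rw [intervalIntegral.integral_comp_mul_left (fun y => Real.cos y) (by exact_mod_cast hm)]
  simp [Real.sin_int_mul_pi]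

lemma sin_orth (j k : ℕ) : ∫ θ in (0:ℝ)..Real.pi, Real.sin ((j+1)*θ) * Real.sin ((k+1)*θ)
    = if j = k then Real.pi / 2 else 0 := by
  have h : ∀ θ : ℝ, Real.sin ((j+1)*θ) * Real.sin ((k+1)*θ)
     = (1/2) * (Real.cos (((j:ℤ)-k : ℤ) * θ) - Real.cos (((j:ℤ)+k+2 : ℤ) * θ)) := by
    intro θ
    have e1 : (((j:ℤ)-k : ℤ):ℝ) * θ = (j+1)*θ - (k+1)*θ := by push_cast; ring
    have e2 : (((j:ℤ)+k+2 : ℤ):ℝ) * θ = (j+1)*θ + (k+1)*θ := by push_cast; ring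
    rw [e1, e2, Real.cos_sub, Real.cos_add]; ring
  simp_rw [h]
  rw [intervalIntegral.integral_const_mul, intervalIntegral.integral_sub
    (by apply Continuous.intervalIntegrable; fun_prop) (by apply Continuous.intervalIntegrable; fun_prop),
    cos_int (j+k+2) (by omega)]
  split_ifs with hjk
  · subst hjk; simp; ring
  · rw [cos_int _ (by omega)]; simp

lemma nik0 (S : Polynomial ℝ) (N : ℕ) (hS : S.natDegree ≤ N) :
    |S.eval 0| ≤ (N+1) * ∫ t in (-1:ℝ)..1, |S.eval t| := by
  obtain ⟨c, hc⟩ := nik_rep N S hS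
  set L := ∫ t in (-1:ℝ)..1, |S.eval t| with hL
  have hsub : ∫ θ in (0:ℝ)..Real.pi, |S.eval (Real.cos θ)| * Real.sin θ = L := by
    have := intervalIntegral.integral_comp_mul_deriv (a := 0) (b := Real.pi) (f := Real.cos)
      (f' := fun θ => - Real.sin θ) (g := fun t => |S.eval t|)
      (fun θ _ => Real.hasDerivAt_cos θ) (by fun_prop) (by fun_prop)
    simp only [Real.cos_zero, Real.cos_pi, Function.comp, mul_neg, intervalIntegral.integral_neg] at this
    rw [hL, intervalIntegral.integral_symm 1 (-1), ← this, neg_neg]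
  have hL0 : 0 ≤ L := intervalIntegral.integral_nonneg (by norm_num) (fun _ _ => abs_nonneg _)
  have hck : ∀ k ∈ Finset.range (N+1), |c k| ≤ L := by
    intro k hk
    have h1 : ∫ θ in (0:ℝ)..Real.pi, (S.eval (Real.cos θ) * Real.sin θ) * Real.sin ((k+1)*θ)
        = c k * (Real.pi/2) := by
      simp_rw [hc, Finset.sum_mul, mul_assoc]
      rw [intervalIntegral.integral_finsetSum
        (fun i _ => by apply Continuous.intervalIntegrable; fun_prop)]
      simp_rw [intervalIntegral.integral_const_mul, sin_orth]
      simp at hk ⊢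
      omega
    have h2 : |c k * (Real.pi/2)| ≤ L := by
      rw [← h1, ← hsub]
      refine (intervalIntegral.abs_integral_le_integral_abs Real.pi_pos.le).trans ?_
      apply intervalIntegral.integral_mono_on Real.pi_pos.le
      · apply Continuous.intervalIntegrable; fun_prop
      · apply Continuous.intervalIntegrable; fun_prop
      intro θ hθ
      have hs := Real.sin_nonneg_of_mem_Icc hθ
      rw [abs_mul, abs_mul, abs_of_nonneg hs]
      exact mul_le_of_le_one_right (by positivity) (Real.abs_sin_le_one _)
    rw [abs_mul, abs_of_pos (show 0 < Real.pi/2 by positivity)] at h2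
    have : 1 ≤ Real.pi/2 := by linarith [Real.pi_gt_three]
    nlinarith [abs_nonneg (c k)]
  have h0 := hc (Real.pi/2)
  rw [Real.cos_pi_div_two, Real.sin_pi_div_two, mul_one] at h0
  rw [h0]
  refine (Finset.abs_sum_le_sum_abs _ _).trans ?_
  refine (Finset.sum_le_sum (g := fun _ => L) fun k hk => ?_).trans ?_
  · rw [abs_mul]
    exact (mul_le_of_le_one_right (by positivity) (Real.abs_sin_le_one _)).trans (hck k hk)
  · simp

lemma nik (S : Polynomial ℝ) (N : ℕ) (hS : S.natDegree ≤ N) (ξ δ : ℝ) (hδ : 0 < δ)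
    (hpos : ∀ t ∈ Set.Icc (ξ-δ) (ξ+δ), 0 ≤ S.eval t) :
    δ * S.eval ξ ≤ (N+1) * ∫ t in (ξ-δ)..(ξ+δ), S.eval t := by
  have h := nik0 (S.comp (Polynomial.C δ * Polynomial.X + Polynomial.C ξ)) N (by
    refine Polynomial.natDegree_comp_le.trans ?_
    have : (Polynomial.C δ * Polynomial.X + Polynomial.C ξ).natDegree ≤ 1 :=
      Polynomial.natDegree_linear_le
    nlinarith)
  simp only [Polynomial.eval_comp, Polynomial.eval_add, Polynomial.eval_mul, Polynomial.eval_C,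
    Polynomial.eval_X, mul_zero, zero_add] at h
  have e : ∫ t in (-1:ℝ)..1, |S.eval (δ * t + ξ)| = δ⁻¹ * ∫ t in (ξ-δ)..(ξ+δ), S.eval t := by
    rw [intervalIntegral.integral_comp_mul_add (fun t => |S.eval t|) hδ.ne']
    rw [smul_eq_mul]
    congr 1
    rw [show δ * -1 + ξ = ξ - δ by ring, show δ * 1 + ξ = ξ + δ by ring]
    apply intervalIntegral.integral_congr
    intro t ht
    rw [Set.uIcc_of_le (by linarith)] at ht
    exact abs_of_nonneg (hpos t ht)
  rw [e] at h
  have := (le_abs_self _).trans h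
  calc δ * S.eval ξ ≤ δ * ((N+1) * (δ⁻¹ * ∫ t in (ξ-δ)..(ξ+δ), S.eval t)) := by gcongr
    _ = _ := by field_simp

lemma poly_int (μ : Measure ℝ) (hmom : ∀ k : ℕ, Integrable (fun t : ℝ => t ^ k) μ)
    (S : Polynomial ℝ) : Integrable (fun t => S.eval t) μ := by
  simp_rw [Polynomial.eval_eq_sum_range]
  exact integrable_finsetSum _ fun i _ => (hmom i).const_mul _

lemma core (μ : Measure ℝ) [IsFiniteMeasure μ] (hmom : ∀ k : ℕ, Integrable (fun t : ℝ => t ^ k) μ)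
    (a b : ℝ) (hsupp : μ (Set.Icc a b)ᶜ = 0) (U : Set ℝ) (hU : IsOpen U) (c M : ℝ) (hc : 0 < c)
    (hM : 0 < M)
    (hlo : ENNReal.ofReal c • volume.restrict U ≤ μ.restrict U)
    (hhi : μ.restrict U ≤ ENNReal.ofReal M • volume.restrict U)
    (S : Polynomial ℝ) (hS0 : S ≠ 0) (N : ℕ) (hN : S.natDegree ≤ N)
    (hpos : ∀ t ∈ Set.Icc a b, 0 ≤ S.eval t)
    (A h δ c₀ d₀ : ℝ) (hh : 0 < h) (hhδ : h ≤ δ) (hA : c₀ ≤ A) (hB : A + h ≤ d₀)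
    (hsub : Set.Icc (c₀ - 2*δ) (d₀ + 2*δ) ⊆ U ∩ Set.Icc a b)
    (horth : ∫ t, (t - A) * (t - (A+h)) * S.eval t ∂μ = 0) :
    2 * c * δ ≤ (N+1) * (9 * M * h) := by
  have hδ : 0 < δ := hh.trans_le hhδ
  set W := Set.Icc (A-h) (A+2*h) with hW
  have hWsub : W ⊆ Set.Icc (c₀ - δ) (d₀ + δ) := Set.Icc_subset_Icc (by linarith) (by linarith)
  obtain ⟨ξ, hξW, hξ⟩ := isCompact_Icc.exists_isMaxOn (s := W)
    (Set.nonempty_Icc.2 (by linarith)) (f := fun t => S.eval t) (by fun_prop)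
  have hξ' : ∀ t ∈ W, S.eval t ≤ S.eval ξ := hξ
  set I := Set.Icc (ξ-δ) (ξ+δ) with hI
  have hIs : I ⊆ U ∩ Set.Icc a b := by
    refine Set.Subset.trans ?_ hsub
    have := hWsub hξW
    exact Set.Icc_subset_Icc (by linarith [this.1]) (by linarith [this.2])
  have hWs : W ⊆ U ∩ Set.Icc a b := by
    refine Set.Subset.trans (hWsub.trans ?_) hsub
    exact Set.Icc_subset_Icc (by linarith) (by linarith)
  have hSξ : 0 < S.eval ξ := by
    refine lt_of_le_of_ne (hpos ξ (hWs hξW).2) fun h0 => hS0 ?_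
    apply Polynomial.eq_zero_of_infinite_isRoot
    refine (Set.Icc_infinite (show A-h < A+2*h by linarith)).mono fun t ht => ?_
    exact le_antisymm (h0 ▸ hξ' t ht) (hpos t (hWs ht).2)
  have hnik := nik S N hN ξ δ hδ (fun t ht => hpos t (hIs ht).2)
  have hint : Integrable (fun t => S.eval t) μ := poly_int μ hmom S
  have hμI : c * ∫ t in (ξ-δ)..(ξ+δ), S.eval t ≤ ∫ t in I, S.eval t ∂μ := by
    rw [intervalIntegral.integral_of_le (by linarith), ← integral_Icc_eq_integral_Ioc, ← hI]
    have h1 : ENNReal.ofReal c • volume.restrict I ≤ μ.restrict I := by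
      have := Measure.restrict_mono (le_refl I) hlo
      rwa [Measure.restrict_smul, Measure.restrict_restrict measurableSet_Icc,
        Measure.restrict_restrict measurableSet_Icc, Set.inter_eq_left.2 (fun t ht => (hIs ht).1)] at this
    have := integral_mono_measure (f := fun t => S.eval t) h1 ?_ hint.integrableOn
    · rwa [integral_smul_measure, ENNReal.toReal_ofReal hc.le, smul_eq_mul] at this
    · exact (ae_restrict_mem measurableSet_Icc).mono fun t ht => hpos t (hIs ht).2
  have hμW : μ.real W ≤ M * (3 * h) := by
    have h1 := hhi W
    rw [Measure.smul_apply, Measure.restrict_apply measurableSet_Icc,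
      Measure.restrict_apply measurableSet_Icc, Set.inter_eq_left.2 (fun t ht => (hWs ht).1),
      hW, Real.volume_Icc, smul_eq_mul, ← ENNReal.ofReal_mul hM.le] at h1
    have := ENNReal.toReal_mono ENNReal.ofReal_ne_top h1
    rw [ENNReal.toReal_ofReal (by nlinarith)] at this
    refine this.trans (le_of_eq ?_); ring
  have key : ∫ t, I.indicator (fun t => 2 * h^2 * S.eval t) t ∂μ ≤
      ∫ t, ((t - A) * (t - (A+h)) * S.eval t + W.indicator (fun _ => 3 * h^2 * S.eval ξ) t) ∂μ := by
    have i1 : Integrable (fun t => (t - A) * (t - (A+h)) * S.eval t) μ := by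
      have := poly_int μ hmom ((Polynomial.X - Polynomial.C A) * (Polynomial.X - Polynomial.C (A+h)) * S)
      simpa using this
    apply integral_mono_ae
    · exact (hint.const_mul _).indicator measurableSet_Icc
    · exact i1.add ((integrable_const _).indicator measurableSet_Icc)
    · have : ∀ᵐ t ∂μ, t ∈ Set.Icc a b := hsupp
      filter_upwards [this] with t ht
      have hp := hpos t ht
      by_cases htW : t ∈ W
      · have hl := hξ' t htW
        have e : I.indicator (fun t => 2 * h^2 * S.eval t) t ≤ 2 * h^2 * S.eval t :=
          Set.indicator_apply_le' (fun _ => le_rfl) (fun _ => by positivity)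
        rw [Set.indicator_of_mem htW]
        refine e.trans ?_
        have q : -h^2 ≤ (t - A) * (t - (A+h)) := by nlinarith [sq_nonneg (2*(t-A)-h)]
        nlinarith [mul_le_mul_of_nonneg_right q hp, mul_le_mul_of_nonneg_left hl (sq_nonneg h)]
      · rw [Set.indicator_of_notMem htW, add_zero]
        have e : I.indicator (fun t => 2 * h^2 * S.eval t) t ≤ 2 * h^2 * S.eval t :=
          Set.indicator_apply_le' (fun _ => le_rfl) (fun _ => by positivity)
        refine e.trans (mul_le_mul_of_nonneg_right ?_ hp)
        rw [hW, Set.mem_Icc, not_and_or, not_le, not_le] at htW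
        rcases htW with h' | h' <;> nlinarith
  rw [integral_add, horth, zero_add, integral_indicator measurableSet_Icc,
    integral_indicator measurableSet_Icc, integral_const_mul, setIntegral_const, smul_eq_mul] at key
  · set L := ∫ t in (ξ-δ)..(ξ+δ), S.eval t
    have k1 : 2 * h^2 * (c * L) ≤ M * (3*h) * (3 * h^2 * S.eval ξ) :=
      (mul_le_mul_of_nonneg_left hμI (by positivity)).trans (key.trans (by gcongr))
    have k2 : 2 * (c * L) ≤ 9 * M * h * S.eval ξ := by
      have : 0 < h^2 := by positivity
      refine le_of_mul_le_mul_left ?_ this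
      linarith
    have k3 : (2 * c * δ) * S.eval ξ ≤ ((N+1) * (9 * M * h)) * S.eval ξ := by
      calc _ = 2 * c * (δ * S.eval ξ) := by ring
        _ ≤ 2 * c * ((N+1) * L) := by gcongr
        _ = (N+1) * (2 * (c * L)) := by ring
        _ ≤ (N+1) * (9 * M * h * S.eval ξ) := by gcongr
        _ = _ := by ring
    exact le_of_mul_le_mul_right k3 hSξ
  · have := poly_int μ hmom ((Polynomial.X - Polynomial.C A) * (Polynomial.X - Polynomial.C (A+h)) * S)
    simpa using this
  · exact (integrable_const _).indicator measurableSet_Icc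

lemma orth_poly (μ : Measure ℝ) (hmom : ∀ k : ℕ, Integrable (fun t : ℝ => t ^ k) μ)
    (P Q : Polynomial ℝ) (n : ℕ) (hQ : Q.natDegree < n)
    (h : ∀ k < n, ∫ t, P.eval t * t ^ k ∂μ = 0) : ∫ t, P.eval t * Q.eval t ∂μ = 0 := by
  have e : ∀ t, P.eval t * Q.eval t
      = ∑ k ∈ Finset.range (Q.natDegree + 1), Q.coeff k * (P.eval t * t ^ k) := by
    intro t
    rw [Polynomial.eval_eq_sum_range (p := Q), Finset.mul_sum]
    exact Finset.sum_congr rfl fun _ _ => by ring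
  simp_rw [e]
  rw [integral_finsetSum]
  · refine Finset.sum_eq_zero fun k hk => ?_
    rw [integral_const_mul, h k (by rw [Finset.mem_range] at hk; omega), mul_zero]
  · intro k _
    have := poly_int μ hmom (P * Polynomial.X ^ k)
    simp only [Polynomial.eval_mul, Polynomial.eval_pow, Polynomial.eval_X] at this
    exact this.const_mul _

lemma exists_margin (c₀ d₀ : ℝ) (V : Set ℝ) (hV : IsOpen V) (h : Set.Icc c₀ d₀ ⊆ V)
    (hcd : c₀ ≤ d₀) : ∃ δ > 0, Set.Icc (c₀ - 2*δ) (d₀ + 2*δ) ⊆ V := by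
  obtain ⟨ε, hε, hs⟩ := isCompact_Icc.exists_cthickening_subset_open hV h
  refine ⟨ε/2, by positivity, fun t ht => hs ?_⟩
  have h1 := ht.1
  have h2 := ht.2
  rcases le_total t c₀ with h' | h'
  · refine Metric.mem_cthickening_of_dist_le t c₀ ε _ ⟨le_rfl, hcd⟩ ?_
    rw [Real.dist_eq, abs_le]; constructor <;> linarith
  · rcases le_total t d₀ with h'' | h''
    · exact Metric.mem_cthickening_of_dist_le t t ε _ ⟨h', h''⟩ (by simpa using hε.le)
    · refine Metric.mem_cthickening_of_dist_le t d₀ ε _ ⟨hcd, le_rfl⟩ ?_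
      rw [Real.dist_eq, abs_le]; constructor <;> linarith

/-- **Lower bound on the spacing of the nodes:** if `μ₁` is absolutely continuous near
`J₁ = [c₀,d₀] ⊆ (a₁,b₁)` with density `0 < c ≤ μ₁′ ≤ M` there, then there is `C > 0`,
independent of `n`, such that for `n ≥ 3`, `2 ≤ ℓ ≤ n − 1` and nodes
`x_{ℓ−1,2n}, x_{ℓ+1,2n} ∈ J₁` one has `x_{ℓ+1,2n} − x_{ℓ−1,2n} ≥ C/n`
(nodes are `1`-based, so `x_{ℓ,2n}` is `ad.x ⟨ℓ-1,_⟩`). -/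
theorem angelesco_node_spacing_lower_bound
    (μ₁ μ₂ : Measure ℝ) [IsFiniteMeasure μ₁] [IsFiniteMeasure μ₂]
    (a₁ b₁ a₂ b₂ : ℝ) (hab₁ : a₁ < b₁) (hgap : b₁ ≤ a₂) (hab₂ : a₂ < b₂)
    (hsupp₁ : μ₁ (Set.Icc a₁ b₁)ᶜ = 0) (hsupp₂ : μ₂ (Set.Icc a₂ b₂)ᶜ = 0)
    (hinf₁ : ∀ s : Finset ℝ, μ₁ ((s : Set ℝ))ᶜ ≠ 0)
    (hinf₂ : ∀ s : Finset ℝ, μ₂ ((s : Set ℝ))ᶜ ≠ 0)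
    (hmom₁ : ∀ k : ℕ, Integrable (fun t : ℝ => t ^ k) μ₁)
    (hmom₂ : ∀ k : ℕ, Integrable (fun t : ℝ => t ^ k) μ₂)
    (c₀ d₀ : ℝ) (hc₀d₀ : c₀ ≤ d₀) (hJ : Set.Icc c₀ d₀ ⊆ Set.Ioo a₁ b₁)
    (hac : ∃ U : Set ℝ, IsOpen U ∧ Set.Icc c₀ d₀ ⊆ U ∧
      ∃ ρ : ℝ → ENNReal, μ₁.restrict U = (volume.restrict U).withDensity ρ ∧
        ∃ c M : ℝ, 0 < c ∧ ∀ t ∈ U, ENNReal.ofReal c ≤ ρ t ∧ ρ t ≤ ENNReal.ofReal M) :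
    ∃ C > (0 : ℝ), ∀ (n : ℕ) (hn : 3 ≤ n) (ad : Angelesco μ₁ μ₂ a₁ b₁ a₂ b₂ n)
      (ℓ : ℕ) (hℓ₁ : 2 ≤ ℓ) (hℓ₂ : ℓ ≤ n - 1),
        ad.x ⟨ℓ - 2, by omega⟩ ∈ Set.Icc c₀ d₀ → ad.x ⟨ℓ, by omega⟩ ∈ Set.Icc c₀ d₀ →
          C / n ≤ ad.x ⟨ℓ, by omega⟩ - ad.x ⟨ℓ - 2, by omega⟩ := by
  obtain ⟨U, hU, hJU, ρ, hρ, c, M, hc, hcM⟩ := hac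
  have hM : 0 < M := by
    have := hcM c₀ (hJU ⟨le_rfl, hc₀d₀⟩)
    have h1 := this.1.trans this.2
    by_contra hn
    rw [ENNReal.ofReal_of_nonpos (not_lt.1 hn), nonpos_iff_eq_zero, ENNReal.ofReal_eq_zero] at h1
    linarith
  have hlo : ENNReal.ofReal c • volume.restrict U ≤ μ₁.restrict U := by
    rw [hρ, ← withDensity_const]
    exact withDensity_mono ((ae_restrict_mem hU.measurableSet).mono fun t ht => (hcM t ht).1)
  have hhi : μ₁.restrict U ≤ ENNReal.ofReal M • volume.restrict U := by
    rw [hρ, ← withDensity_const]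
    exact withDensity_mono ((ae_restrict_mem hU.measurableSet).mono fun t ht => (hcM t ht).2)
  obtain ⟨δ, hδ, hmar⟩ := exists_margin c₀ d₀ (U ∩ Set.Ioo a₁ b₁) (hU.inter isOpen_Ioo)
    (Set.subset_inter hJU hJ) hc₀d₀
  refine ⟨min δ (c * δ / (18 * M)), by positivity, ?_⟩
  intro n hn ad ℓ hℓ₁ hℓ₂ hA hB
  have hnpos : (0:ℝ) < n := by exact_mod_cast (by omega : 0 < n)
  have hn1 : (1:ℝ) ≤ n := by exact_mod_cast (by omega : 1 ≤ n)
  set iA : Fin (2 * n) := ⟨ℓ - 2, by omega⟩ with hiA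
  set iB : Fin (2 * n) := ⟨ℓ, by omega⟩ with hiB
  have hAB : iA < iB := by rw [hiA, hiB, Fin.mk_lt_mk]; omega
  have hlt : ad.x iA < ad.x iB := ad.mono hAB
  rcases le_total δ (ad.x iB - ad.x iA) with hbig | hsmall
  · refine le_trans ?_ hbig
    rw [div_le_iff₀ hnpos]
    nlinarith [min_le_left δ (c * δ / (18 * M))]
  classical
  set G : Finset (Fin (2*n)) := Finset.univ.filter (fun i => ¬ (i:ℕ) < n) with hG
  set F0 : Finset (Fin (2*n)) := Finset.univ.filter (fun i => (i:ℕ) < n) with hF0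
  set F : Finset (Fin (2*n)) := (F0.erase iA).erase iB with hF
  have hA0 : iA ∈ F0 := by simp [hF0, hiA]; omega
  have hB0 : iB ∈ F0.erase iA := by
    rw [Finset.mem_erase]
    exact ⟨hAB.ne', by simp [hF0, hiB]; omega⟩
  have hF0c : F0.card = n := by
    rw [hF0, Fin.card_filter_val_lt]; omega
  have hGc : G.card = n := by
    have := Finset.card_filter_add_card_filter_not (s := (Finset.univ : Finset (Fin (2*n)))) (fun i => (i:ℕ) < n)
    rw [← hF0, ← hG, hF0c, Finset.card_univ, Fintype.card_fin] at this
    omega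
  have hFc : F.card = n - 2 := by
    rw [hF, Finset.card_erase_of_mem hB0, Finset.card_erase_of_mem hA0, hF0c]; omega
  set Q : Polynomial ℝ := ∏ i ∈ F, (Polynomial.X - Polynomial.C (ad.x i)) with hQ
  set R : Polynomial ℝ := ∏ i ∈ G, (Polynomial.C (ad.x i) - Polynomial.X) with hR
  set P : Polynomial ℝ := ∏ i, (Polynomial.X - Polynomial.C (ad.x i)) with hP
  have hQd : Q.natDegree = n - 2 := by
    rw [hQ, Polynomial.natDegree_finsetProd_X_sub_C_eq_card, hFc]
  have hRd : R.natDegree ≤ n := by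
    refine (Polynomial.natDegree_prod_le _ _).trans ?_
    refine (Finset.sum_le_card_nsmul _ _ 1 fun i _ => ?_).trans (by simp [hGc])
    refine (Polynomial.natDegree_sub_le _ _).trans (by simp)
  have hRpos : ∀ t ∈ Set.Icc a₁ b₁, 0 < R.eval t := by
    intro t ht
    rw [hR, Polynomial.eval_prod]
    refine Finset.prod_pos fun i hi => ?_
    have h1 := (ad.mem2 i (by simpa [hG] using hi)).1
    simp only [Polynomial.eval_sub, Polynomial.eval_C, Polynomial.eval_X]
    linarith [ht.2]
  have hPeq : ∀ t, P.eval t * Q.eval t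
      = (-1)^n * ((t - ad.x iA) * (t - ad.x iB) * (Q^2 * R).eval t) := by
    intro t
    have e1 : P.eval t = (∏ i ∈ F0, (t - ad.x i)) * ∏ i ∈ G, (t - ad.x i) := by
      rw [hP, Polynomial.eval_prod, hF0, hG, Finset.prod_filter_mul_prod_filter_not]
      simp
    have e2 : ∏ i ∈ G, (t - ad.x i) = (-1)^n * R.eval t := by
      have hp : ((-1:ℝ))^n = ∏ _i ∈ G, (-1:ℝ) := by rw [Finset.prod_const, hGc]
      rw [hR, Polynomial.eval_prod, hp, ← Finset.prod_mul_distrib]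
      refine Finset.prod_congr rfl fun i _ => ?_
      simp
    have e3 : ∏ i ∈ F0, (t - ad.x i) = (t - ad.x iA) * ((t - ad.x iB) * Q.eval t) := by
      rw [← Finset.mul_prod_erase F0 _ hA0, ← Finset.mul_prod_erase _ _ hB0, hQ,
        Polynomial.eval_prod]
      simp [hF]
    rw [e1, e2, e3, Polynomial.eval_mul, Polynomial.eval_pow]; ring
  have horth : ∫ t, (t - ad.x iA) * (t - ad.x iB) * (Q^2 * R).eval t ∂μ₁ = 0 := by
    have h0 := orth_poly μ₁ hmom₁ P Q n (by omega) (fun k hk => by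
      have := ad.orth1 k hk
      simpa [hP, Polynomial.eval_prod] using this)
    simp_rw [hPeq] at h0
    rw [integral_const_mul] at h0
    exact (mul_eq_zero.1 h0).resolve_left (by simp)
  have hRne : R ≠ 0 := by
    intro h0
    have := hRpos a₁ ⟨le_rfl, hab₁.le⟩
    rw [h0] at this
    simp at this
  have hQne : Q ≠ 0 := Finset.prod_ne_zero_iff.2 fun i _ => Polynomial.X_sub_C_ne_zero _
  have hfin := core μ₁ hmom₁ a₁ b₁ hsupp₁ U hU c M hc hM hlo hhi (Q^2 * R)
    (mul_ne_zero (pow_ne_zero _ hQne) hRne) (3*n-1) (by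
      refine Polynomial.natDegree_mul_le.trans ?_
      rw [Polynomial.natDegree_pow, hQd]; omega)
    (fun t ht => by
      rw [Polynomial.eval_mul, Polynomial.eval_pow]
      exact mul_nonneg (sq_nonneg _) (hRpos t ht).le)
    (ad.x iA) (ad.x iB - ad.x iA) δ c₀ d₀ (by linarith) hsmall hA.1 (by linarith [hB.2])
    (hmar.trans (Set.inter_subset_inter_right _ Set.Ioo_subset_Icc_self))
    (by simpa using horth)
  have hcast : (((3*n-1 : ℕ)) : ℝ) + 1 = 3 * n := by
    have : 3*n-1+1 = 3*n := by omega
    exact_mod_cast this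
  rw [hcast] at hfin
  refine (div_le_div_of_nonneg_right (min_le_right _ _) hnpos.le).trans ?_
  rw [div_le_iff₀ hnpos, div_le_iff₀ (by positivity)]
  have : 0 ≤ c * δ := by positivity
  nlinarith
end

section
/- Let J₁ be a closed subinterval of (a₁,b₁), suppose μ₁ is absolutely continuous in an open neighborhood of J₁ with density μ₁′ ≥ c > 0 there, and suppose C₂ > 0 is such that λ_{j,2n}^{(1)} ≤ C₂/n whenever x_{j,2n} ∈ J₁. Then for all n ≥ 3 and all 2 ≤ j ≤ n − 1 with x_{j,2n}, x_{j+1,2n} ∈ J₁, one has x_{j+1,2n} − x_{j,2n} ≤ 2C₂/(c n). -/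
open MeasureTheory

lemma ang_gm {ι : Type*} (s : Finset ι) (A B C : ι → ℝ) (θ : ℝ)
    (hA : ∀ i ∈ s, 0 ≤ A i) (hB : ∀ i ∈ s, 0 ≤ B i)
    (h : ∀ i ∈ s, A i ^ (1 - θ) * B i ^ θ ≤ C i) :
    (∏ i ∈ s, A i) ^ (1 - θ) * (∏ i ∈ s, B i) ^ θ ≤ ∏ i ∈ s, C i := by
  rw [← Real.finsetProd_rpow s A hA, ← Real.finsetProd_rpow s B hB, ← Finset.prod_mul_distrib]
  exact Finset.prod_le_prod (fun i hi => mul_nonneg (Real.rpow_nonneg (hA i hi) _)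
    (Real.rpow_nonneg (hB i hi) _)) h

/-- The key pointwise inequality. -/
lemma ang_key {n : ℕ} (s : Finset (Fin n)) (y z : Fin n → ℝ) (u v t α β : ℝ) (huv : u < v)
    (hut : u ≤ t) (htv : t ≤ v)
    (hy : ∀ i ∈ s, y i < u ∨ v < y i) (hz : ∀ i, v < z i) (hα : 0 ≤ α) (hβ : 0 ≤ β)
    (h1 : (∏ i, (z i - u)) * (∏ i ∈ s, (u - y i)) ^ 2 * α ^ 2 = 1)
    (h2 : (∏ i, (z i - v)) * (∏ i ∈ s, (v - y i)) ^ 2 * β ^ 2 = 1) :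
    1 ≤ (∏ i, (z i - t)) * (∏ i ∈ s, (t - y i)) ^ 2 *
      ((v - t) / (v - u) * α + (t - u) / (v - u) * β) ^ 2 := by
  have hd : 0 < v - u := sub_pos.2 huv
  obtain ⟨θ, hθ⟩ : ∃ θ, θ = (t - u) / (v - u) := ⟨_, rfl⟩
  have hθ0 : 0 ≤ θ := by rw [hθ]; exact div_nonneg (by linarith) hd.le
  have hθ1 : 0 ≤ 1 - θ := by
    rw [hθ, sub_nonneg, div_le_one hd]; linarith
  have e1 : (v - t) / (v - u) = 1 - θ := by rw [hθ]; field_simp; ring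
  have ht : t = (1 - θ) * u + θ * v := by rw [hθ]; field_simp; ring
  have amgm : ∀ a b : ℝ, 0 ≤ a → 0 ≤ b → a ^ (1 - θ) * b ^ θ ≤ (1 - θ) * a + θ * b :=
    fun a b ha hb => Real.geom_mean_le_arith_mean2_weighted hθ1 hθ0 ha hb (by ring)
  have gz := ang_gm Finset.univ (fun i => z i - u) (fun i => z i - v) (fun i => z i - t) θ
    (fun i _ => by have := hz i; linarith) (fun i _ => by have := hz i; linarith)
    (fun i _ => by
      have := hz i
      refine (amgm _ _ (by linarith) (by linarith)).trans (le_of_eq ?_)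
      rw [ht]; ring)
  have gy := ang_gm s (fun i => |u - y i|) (fun i => |v - y i|) (fun i => |t - y i|) θ
    (fun i _ => abs_nonneg _) (fun i _ => abs_nonneg _)
    (fun i hi => by
      refine (amgm _ _ (abs_nonneg _) (abs_nonneg _)).trans (le_of_eq ?_)
      rcases hy i hi with h | h
      · rw [abs_of_pos, abs_of_pos, abs_of_pos]
        · rw [ht]; ring
        all_goals linarith
      · rw [abs_of_neg, abs_of_neg, abs_of_neg]
        · rw [ht]; ring
        all_goals linarith)
  rw [e1, ← hθ]
  have gm := amgm α β hα hβ
  simp only [← Finset.abs_prod] at gy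
  set Zu := ∏ i, (z i - u)
  set Zv := ∏ i, (z i - v)
  set Zt := ∏ i, (z i - t)
  have hZu : 0 ≤ Zu := Finset.prod_nonneg fun i _ => by have := hz i; linarith
  have hZv : 0 ≤ Zv := Finset.prod_nonneg fun i _ => by have := hz i; linarith
  rw [← sq_abs (∏ i ∈ s, (t - y i))]
  rw [← sq_abs (∏ i ∈ s, (u - y i))] at h1
  rw [← sq_abs (∏ i ∈ s, (v - y i))] at h2
  set Du := |∏ i ∈ s, (u - y i)|
  set Dv := |∏ i ∈ s, (v - y i)|
  set Dt := |∏ i ∈ s, (t - y i)|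
  have hDu : 0 ≤ Du := abs_nonneg _
  have hDv : 0 ≤ Dv := abs_nonneg _
  have E : (Zu ^ (1 - θ) * Zv ^ θ) * (Du ^ (1 - θ) * Dv ^ θ) ^ 2 *
      (α ^ (1 - θ) * β ^ θ) ^ 2 = 1 := by
    have a1 : Zu ^ (1 - θ) * (Du ^ (1 - θ)) ^ 2 * (α ^ (1 - θ)) ^ 2 = 1 := by
      have : (Zu * Du ^ 2 * α ^ 2) ^ (1 - θ) = 1 := by rw [h1, Real.one_rpow]
      rw [pow_two, pow_two, Real.mul_rpow (by positivity) (by positivity),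
        Real.mul_rpow (by positivity) (by positivity),
        Real.mul_rpow (by positivity) (by positivity),
        Real.mul_rpow (by positivity) (by positivity)] at this
      rw [pow_two, pow_two, this]
    have a2 : Zv ^ θ * (Dv ^ θ) ^ 2 * (β ^ θ) ^ 2 = 1 := by
      have : (Zv * Dv ^ 2 * β ^ 2) ^ θ = 1 := by rw [h2, Real.one_rpow]
      rw [pow_two, pow_two, Real.mul_rpow (by positivity) (by positivity),
        Real.mul_rpow (by positivity) (by positivity),
        Real.mul_rpow (by positivity) (by positivity),
        Real.mul_rpow (by positivity) (by positivity)] at this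
      rw [pow_two, pow_two, this]
    calc _ = (Zu ^ (1 - θ) * (Du ^ (1 - θ)) ^ 2 * (α ^ (1 - θ)) ^ 2) *
          (Zv ^ θ * (Dv ^ θ) ^ 2 * (β ^ θ) ^ 2) := by ring
      _ = 1 := by rw [a1, a2, one_mul]
  refine E.symm.le.trans ?_
  have hz0 : 0 ≤ Zu ^ (1 - θ) * Zv ^ θ := by positivity
  have hZt := hz0.trans gz
  have hd0 : 0 ≤ Du ^ (1 - θ) * Dv ^ θ := by positivity
  have hm0 : 0 ≤ α ^ (1 - θ) * β ^ θ := by positivity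
  gcongr

lemma ang_poly_int (μ : Measure ℝ) (hmom : ∀ k : ℕ, Integrable (fun t : ℝ => t ^ k) μ)
    (f : Polynomial ℝ) : Integrable (fun t => f.eval t) μ := by
  simp only [Polynomial.eval_eq_sum_range]
  exact integrable_finset_sum _ fun i _ => (hmom i).const_mul _

lemma ang_quad {μ₁ μ₂ : Measure ℝ} {a₁ b₁ a₂ b₂ : ℝ} {n : ℕ}
    (hmom : ∀ k : ℕ, Integrable (fun t : ℝ => t ^ k) μ₁)
    (ad : Angelesco μ₁ μ₂ a₁ b₁ a₂ b₂ n) (f : Polynomial ℝ) (hf : f.natDegree < 3 * n) :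
    ∫ t, f.eval t ∂μ₁ = ∑ k, f.eval (ad.x k) * qweight ad μ₁ k := by
  set P : Polynomial ℝ := Lagrange.nodal Finset.univ ad.x with hP
  have hmonic : P.Monic := Lagrange.nodal_monic
  have hPd : P.natDegree = 2 * n := by simp [hP, Lagrange.natDegree_nodal]
  have hdec := Polynomial.modByMonic_add_div f P
  set R := f %ₘ P with hR
  set Q := f /ₘ P with hQ
  have hQd : Q.natDegree < n := by
    rw [hQ, Polynomial.natDegree_divByMonic f hmonic, hPd]; omega
  have hRd : R.degree < (Finset.univ : Finset (Fin (2 * n))).card := by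
    have := Polynomial.degree_modByMonic_lt f hmonic
    rw [Polynomial.degree_eq_natDegree hmonic.ne_zero, hPd] at this
    simpa using this
  have hRi := Lagrange.eq_interpolate (s := Finset.univ) (v := ad.x) (f := R)
    ad.mono.injective.injOn hRd
  have hRx : ∀ i, R.eval (ad.x i) = f.eval (ad.x i) := by
    intro i
    rw [← hdec, Polynomial.eval_add, Polynomial.eval_mul, hP,
      Lagrange.eval_nodal_at_node (Finset.mem_univ i)]
    simp
  have hPQ : ∫ t, (P * Q).eval t ∂μ₁ = 0 := by
    have : ∀ t, (P * Q).eval t = ∑ k ∈ Finset.range n, Q.coeff k * ((∏ i, (t - ad.x i)) * t ^ k) := by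
      intro t
      rw [Polynomial.eval_mul, hP, Lagrange.eval_nodal, Polynomial.eval_eq_sum_range' hQd,
        Finset.mul_sum]
      exact Finset.sum_congr rfl fun k _ => by ring
    simp only [this]
    rw [integral_finset_sum]
    · refine Finset.sum_eq_zero fun k hk => ?_
      rw [integral_const_mul, ad.orth1 k (Finset.mem_range.1 hk), mul_zero]
    · intro k _
      have := ang_poly_int μ₁ hmom (P * Polynomial.X ^ k)
      refine Integrable.const_mul ?_ _
      simpa [hP, Lagrange.eval_nodal] using this
  have hRint : ∫ t, R.eval t ∂μ₁ = ∑ k, f.eval (ad.x k) * qweight ad μ₁ k := by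
    have : ∀ t, R.eval t = ∑ k, f.eval (ad.x k) * (Lagrange.basis Finset.univ ad.x k).eval t := by
      intro t
      conv_lhs => rw [hRi]
      simp [Lagrange.interpolate_apply, Polynomial.eval_finset_sum, hRx]
    simp only [this]
    rw [integral_finset_sum]
    · refine Finset.sum_congr rfl fun k _ => ?_
      rw [integral_const_mul, qweight]
    · intro k _
      exact (ang_poly_int μ₁ hmom _).const_mul _
  have : ∀ t, f.eval t = R.eval t + (P * Q).eval t := by
    intro t; rw [← Polynomial.eval_add, hdec]
  simp only [this]
  rw [integral_add (ang_poly_int μ₁ hmom _) (ang_poly_int μ₁ hmom _), hPQ, add_zero, hRint]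
  simp only [this]

/-- **Upper bound on the spacing of the nodes:** if `μ₁` is absolutely continuous near
`J₁ = [c₀,d₀] ⊆ (a₁,b₁)` with density `μ₁′ ≥ c > 0` there, and `C₂ > 0` is such that
`λ_{j,2n}^{(1)} ≤ C₂/n` whenever `x_{j,2n} ∈ J₁`, then for `n ≥ 3`, `2 ≤ ℓ ≤ n − 1`
and nodes `x_{ℓ,2n}, x_{ℓ+1,2n} ∈ J₁` one has `x_{ℓ+1,2n} − x_{ℓ,2n} ≤ 2C₂/(c n)`
(nodes are `1`-based, so `x_{ℓ,2n}` is `(ad n).x ⟨ℓ-1,_⟩`). -/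
theorem angelesco_node_spacing_upper_bound
    (μ₁ μ₂ : Measure ℝ) [IsFiniteMeasure μ₁] [IsFiniteMeasure μ₂]
    (a₁ b₁ a₂ b₂ : ℝ) (hab₁ : a₁ < b₁) (hgap : b₁ ≤ a₂) (hab₂ : a₂ < b₂)
    (hsupp₁ : μ₁ (Set.Icc a₁ b₁)ᶜ = 0) (hsupp₂ : μ₂ (Set.Icc a₂ b₂)ᶜ = 0)
    (hinf₁ : ∀ s : Finset ℝ, μ₁ ((s : Set ℝ))ᶜ ≠ 0)
    (hinf₂ : ∀ s : Finset ℝ, μ₂ ((s : Set ℝ))ᶜ ≠ 0)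
    (hmom₁ : ∀ k : ℕ, Integrable (fun t : ℝ => t ^ k) μ₁)
    (hmom₂ : ∀ k : ℕ, Integrable (fun t : ℝ => t ^ k) μ₂)
    (c₀ d₀ : ℝ) (hc₀d₀ : c₀ ≤ d₀) (hJ : Set.Icc c₀ d₀ ⊆ Set.Ioo a₁ b₁)
    (c : ℝ) (hc : 0 < c)
    (hac : ∃ U : Set ℝ, IsOpen U ∧ Set.Icc c₀ d₀ ⊆ U ∧
      ∃ ρ : ℝ → ENNReal, μ₁.restrict U = (volume.restrict U).withDensity ρ ∧
        ∀ t ∈ U, ENNReal.ofReal c ≤ ρ t)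
    (C₂ : ℝ) (hC₂ : 0 < C₂)
    (ad : ∀ n : ℕ, Angelesco μ₁ μ₂ a₁ b₁ a₂ b₂ n)
    (hwt : ∀ (n : ℕ) (j : Fin (2 * n)), (ad n).x j ∈ Set.Icc c₀ d₀ →
      qweight (ad n) μ₁ j ≤ C₂ / n) :
    ∀ (n : ℕ) (hn : 3 ≤ n) (ℓ : ℕ) (hℓ₁ : 2 ≤ ℓ) (hℓ₂ : ℓ ≤ n - 1),
      (ad n).x ⟨ℓ - 1, by omega⟩ ∈ Set.Icc c₀ d₀ →
      (ad n).x ⟨ℓ, by omega⟩ ∈ Set.Icc c₀ d₀ →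
        (ad n).x ⟨ℓ, by omega⟩ - (ad n).x ⟨ℓ - 1, by omega⟩ ≤ 2 * C₂ / (c * n) := by
  intro n hn ℓ hℓ₁ hℓ₂ hu hv
  set i0 : Fin (2 * n) := ⟨ℓ - 1, by omega⟩ with hi0
  set i1 : Fin (2 * n) := ⟨ℓ, by omega⟩ with hi1
  set A := ad n with hA
  obtain ⟨u, hud⟩ : ∃ u, u = A.x i0 := ⟨_, rfl⟩
  obtain ⟨v, hvd⟩ : ∃ v, v = A.x i1 := ⟨_, rfl⟩
  have huv : u < v := by
    rw [hud, hvd]; apply A.mono; rw [hi0, hi1, Fin.mk_lt_mk]; omega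
  have w0 := hwt n i0 hu
  have w1 := hwt n i1 hv
  rw [← hA] at w0 w1
  rw [← hud] at hu ⊢
  rw [← hvd] at hv ⊢
  let y : Fin n → ℝ := fun i => A.x ⟨i, by omega⟩
  let z : Fin n → ℝ := fun i => A.x ⟨n + i, by omega⟩
  let j0 : Fin n := ⟨ℓ - 1, by omega⟩
  let j1 : Fin n := ⟨ℓ, by omega⟩
  let s : Finset (Fin n) := (Finset.univ.erase j0).erase j1
  have hj : j1 ≠ j0 := by simp only [j0, j1, ne_eq, Fin.mk.injEq]; omega
  have hs : s.card = n - 2 := by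
    simp only [s]
    rw [Finset.card_erase_of_mem (by simp [hj]), Finset.card_erase_of_mem (Finset.mem_univ _)]
    simp; omega
  have hy : ∀ i ∈ s, y i < u ∨ v < y i := by
    intro i hi
    simp only [s, Finset.mem_erase, ne_eq, Finset.mem_univ, and_true, j0, j1, Fin.ext_iff] at hi
    rcases lt_or_ge (i : ℕ) ℓ with h | h
    · left; rw [hud]; apply A.mono; rw [hi0, Fin.mk_lt_mk]; omega
    · right; rw [hvd]; apply A.mono; rw [hi1, Fin.mk_lt_mk]; omega
  have hzb : ∀ i, b₁ < z i := fun i =>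
    lt_of_le_of_lt hgap (A.mem2 ⟨n + i, by omega⟩ (Nat.le_add_right _ _)).1
  have hub : u < b₁ := (hJ hu).2
  have hvb : v < b₁ := (hJ hv).2
  let q : Polynomial ℝ := ∏ i, (Polynomial.C (z i) - Polynomial.X)
  let D : Polynomial ℝ := ∏ i ∈ s, (Polynomial.X - Polynomial.C (y i))
  have hq : ∀ t, q.eval t = ∏ i, (z i - t) := fun t => by simp [q, Polynomial.eval_prod]
  have hD : ∀ t, D.eval t = ∏ i ∈ s, (t - y i) := fun t => by simp [D, Polynomial.eval_prod]
  have hqpos : ∀ t ≤ b₁, 0 < q.eval t := fun t ht => by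
    rw [hq]; exact Finset.prod_pos fun i _ => by have := hzb i; linarith
  have hDne : ∀ t, u ≤ t → t ≤ v → D.eval t ≠ 0 := fun t h1 h2 => by
    rw [hD]
    refine Finset.prod_ne_zero_iff.2 fun i hi => ?_
    rcases hy i hi with h | h
    · exact sub_ne_zero.2 (by linarith)
    · exact sub_ne_zero.2 (by linarith)
  have hroot : ∀ t, u ≤ t → t ≤ v → ∃ α, 0 ≤ α ∧ q.eval t * D.eval t ^ 2 * α ^ 2 = 1 := by
    intro t h1 h2
    have hw : 0 < q.eval t * D.eval t ^ 2 :=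
      mul_pos (hqpos t (by linarith)) (by have := hDne t h1 h2; positivity)
    refine ⟨Real.sqrt (q.eval t * D.eval t ^ 2)⁻¹, Real.sqrt_nonneg _, ?_⟩
    rw [Real.sq_sqrt (by positivity), mul_inv_cancel₀ hw.ne']
  obtain ⟨α, hα, hα1⟩ := hroot u le_rfl huv.le
  obtain ⟨β, hβ, hβ1⟩ := hroot v huv.le le_rfl
  let m : Polynomial ℝ := Polynomial.C (α / (v - u)) * (Polynomial.C v - Polynomial.X) +
    Polynomial.C (β / (v - u)) * (Polynomial.X - Polynomial.C u)
  have hm : ∀ t, m.eval t = (v - t) / (v - u) * α + (t - u) / (v - u) * β := fun t => by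
    simp [m]; ring
  let f : Polynomial ℝ := q * D ^ 2 * m ^ 2
  have hf : ∀ t, f.eval t = q.eval t * D.eval t ^ 2 * m.eval t ^ 2 := fun t => by simp [f]
  have hd : v - u ≠ 0 := (sub_pos.2 huv).ne'
  have hqdeg : q.natDegree ≤ n := by
    refine (Polynomial.natDegree_prod_le _ _).trans ?_
    refine (Finset.sum_le_card_nsmul _ _ 1 fun i _ => ?_).trans (by simp)
    compute_degree
  have hDdeg : D.natDegree ≤ n - 2 := by
    refine (Polynomial.natDegree_prod_le _ _).trans ?_
    refine (Finset.sum_le_card_nsmul _ _ 1 fun i _ => ?_).trans (by simp [hs])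
    compute_degree
  have hmdeg : m.natDegree ≤ 1 := by
    simp only [m]
    compute_degree
  have hfdeg : f.natDegree < 3 * n := by
    have h1 : f.natDegree ≤ (q * D ^ 2).natDegree + (m ^ 2).natDegree :=
      Polynomial.natDegree_mul_le
    have h2 : (q * D ^ 2).natDegree ≤ q.natDegree + (D ^ 2).natDegree :=
      Polynomial.natDegree_mul_le
    have h3 : (D ^ 2).natDegree ≤ 2 * D.natDegree := Polynomial.natDegree_pow_le
    have h4 : (m ^ 2).natDegree ≤ 2 * m.natDegree := Polynomial.natDegree_pow_le
    omega
  have hfu : f.eval u = 1 := by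
    rw [hf, hm, div_self hd, sub_self, zero_div, zero_mul, add_zero, one_mul, hα1]
  have hfv : f.eval v = 1 := by
    rw [hf, hm, div_self hd, sub_self, zero_div, zero_mul, zero_add, one_mul, hβ1]
  have hf0 : ∀ k, k ≠ i0 → k ≠ i1 → f.eval (A.x k) = 0 := by
    intro k h0 h1
    rw [hf]
    rcases lt_or_ge (k : ℕ) n with h | h
    · have : D.eval (A.x k) = 0 := by
        rw [hD]
        refine Finset.prod_eq_zero (i := ⟨k, h⟩) ?_ (by simp [y])
        simp only [hi0, hi1, ne_eq, Fin.ext_iff] at h0 h1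
        simp [s, j0, j1, Fin.ext_iff, h0, h1]
      rw [this]; ring
    · have : q.eval (A.x k) = 0 := by
        rw [hq]
        refine Finset.prod_eq_zero (i := ⟨k - n, by omega⟩) (Finset.mem_univ _) ?_
        simp only [z]
        rw [sub_eq_zero]
        congr 1
        ext; simp; omega
      rw [this]; ring
  have hi01 : i0 ≠ i1 := by
    simp only [hi0, hi1, ne_eq, Fin.mk.injEq]; omega
  have hint : ∫ t, f.eval t ∂μ₁ = qweight A μ₁ i0 + qweight A μ₁ i1 := by
    rw [ang_quad hmom₁ A f hfdeg]
    rw [Finset.sum_eq_add i0 i1 hi01]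
    · rw [← hud, ← hvd, hfu, hfv, one_mul, one_mul]
    · rintro k - ⟨h0, h1⟩
      rw [hf0 k h0 h1, zero_mul]
    · simp
    · simp
  have hlow : μ₁.real (Set.Icc u v) ≤ ∫ t, f.eval t ∂μ₁ := by
    rw [← integral_indicator_one measurableSet_Icc]
    refine integral_mono_ae ((integrable_const (1 : ℝ)).indicator measurableSet_Icc)
      (ang_poly_int μ₁ hmom₁ f) ?_
    have hae : ∀ᵐ t ∂μ₁, t ∈ Set.Icc a₁ b₁ := by
      rw [ae_iff]; exact hsupp₁
    filter_upwards [hae] with t ht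
    by_cases h : t ∈ Set.Icc u v
    · rw [Set.indicator_of_mem h, hf, hm, hq, hD]
      rw [hq, hD] at hα1 hβ1
      exact ang_key s y z u v t α β huv h.1 h.2 hy (fun i => hvb.trans (hzb i)) hα hβ hα1 hβ1
    · rw [Set.indicator_of_notMem h, hf]
      have := hqpos t ht.2
      positivity
  have hden : c * (v - u) ≤ μ₁.real (Set.Icc u v) := by
    obtain ⟨U, hU, hJU, ρ, hρ, hcρ⟩ := hac
    have hsub : Set.Icc u v ⊆ U := (Set.Icc_subset_Icc hu.1 hv.2).trans hJU
    have e : μ₁ (Set.Icc u v) = ∫⁻ t in Set.Icc u v, ρ t := by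
      have h1 : μ₁.restrict U (Set.Icc u v) = μ₁ (Set.Icc u v) := by
        rw [Measure.restrict_apply measurableSet_Icc, Set.inter_eq_left.2 hsub]
      rw [← h1, hρ, withDensity_apply _ measurableSet_Icc,
        Measure.restrict_restrict measurableSet_Icc, Set.inter_eq_left.2 hsub]
    have h2 : ENNReal.ofReal (c * (v - u)) ≤ μ₁ (Set.Icc u v) := by
      rw [e, ENNReal.ofReal_mul hc.le, ← Real.volume_Icc, ← setLIntegral_const]
      exact setLIntegral_mono' measurableSet_Icc fun t ht => hcρ t (hsub ht)
    exact (ENNReal.ofReal_le_iff_le_toReal (measure_ne_top _ _)).1 h2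
  have hn0 : (0 : ℝ) < n := by exact_mod_cast (by omega : 0 < n)
  have htot : c * (v - u) ≤ C₂ / n + C₂ / n := by linarith
  rw [le_div_iff₀ (by positivity)]
  have := mul_le_mul_of_nonneg_right htot hn0.le
  have e2 : (C₂ / n + C₂ / n) * (n : ℝ) = 2 * C₂ := by field_simp; ring
  rw [e2] at this
  linarith
end

section
/- Assume b₁ < a₂ and set Iₙ = ∫_{[a₁,b₁]} pₙ(x)² qₙ(x) dμ₁(x). Then for every 1 ≤ j ≤ n: Iₙ / ( (b₂ − a₁) · pₙ(x_{n+j,2n})² ) ≤ |λ_{n+j,2n}^{(1)}| · |qₙ′(x_{n+j,2n})| ≤ Iₙ / ( (a₂ − b₁) · pₙ(x_{n+j,2n})² ). -/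
open MeasureTheory

/-- `pₙ(y) = ∏_{i=1}^{n} (y − x_{i,2n})`, the monic factor with zeros in `(a₁,b₁)`. -/
noncomputable def pnfun {μ₁ μ₂ : Measure ℝ} {a₁ b₁ a₂ b₂ : ℝ} {n : ℕ}
    (ad : Angelesco μ₁ μ₂ a₁ b₁ a₂ b₂ n) : ℝ → ℝ :=
  fun y => ∏ i ∈ Finset.univ.filter (fun i : Fin (2 * n) => (i : ℕ) < n), (y - ad.x i)

/-- `qₙ(y) = ∏_{i=n+1}^{2n} (x_{i,2n} − y)`, the factor with zeros in `(a₂,b₂)`,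
normalized to be positive on `[a₁,b₁]`. -/
noncomputable def qnfun {μ₁ μ₂ : Measure ℝ} {a₁ b₁ a₂ b₂ : ℝ} {n : ℕ}
    (ad : Angelesco μ₁ μ₂ a₁ b₁ a₂ b₂ n) : ℝ → ℝ :=
  fun y => ∏ i ∈ Finset.univ.filter (fun i : Fin (2 * n) => n ≤ (i : ℕ)), (ad.x i - y)

open MeasureTheory Polynomial in
lemma integrable_poly_aux (μ : Measure ℝ) (h : ∀ k : ℕ, Integrable (fun t : ℝ => t ^ k) μ)
    (p : ℝ[X]) : Integrable (fun t => p.eval t) μ := by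
  simp only [Polynomial.eval_eq_sum_range]
  exact integrable_finsetSum _ (fun i _ => (h i).const_mul _)

open MeasureTheory Polynomial in
lemma orth_poly_aux (μ : Measure ℝ) (h : ∀ k : ℕ, Integrable (fun t : ℝ => t ^ k) μ)
    (P r : ℝ[X]) (n : ℕ) (hr : r.natDegree < n)
    (ho : ∀ k < n, ∫ t, P.eval t * t ^ k ∂μ = 0) : ∫ t, P.eval t * r.eval t ∂μ = 0 := by
  simp only [Polynomial.eval_eq_sum_range (p := r), Finset.mul_sum]
  rw [integral_finsetSum]
  · apply Finset.sum_eq_zero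
    intro i hi
    have : ∀ t : ℝ, P.eval t * (r.coeff i * t ^ i) = r.coeff i * (P.eval t * t ^ i) := by
      intro t; ring
    simp only [this]
    rw [integral_const_mul, ho i (by have := Finset.mem_range.1 hi; omega), mul_zero]
  · intro i _
    have := integrable_poly_aux μ h (P * (C (r.coeff i) * X ^ i))
    simpa using this

/-- **Two-sided bound for the alternating weights of the first rule** (inequality (2.16)).
With `Iₙ = ∫_{[a₁,b₁]} pₙ² qₙ dμ₁` and `b₁ < a₂`, for `1 ≤ j ≤ n`:
`Iₙ/((b₂−a₁) pₙ(x_{n+j,2n})²) ≤ |λ_{n+j,2n}^{(1)}| |qₙ′(x_{n+j,2n})|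
  ≤ Iₙ/((a₂−b₁) pₙ(x_{n+j,2n})²)`. -/
theorem angelesco_alternating_weight_two_sided_bound
    (μ₁ μ₂ : Measure ℝ) [IsFiniteMeasure μ₁] [IsFiniteMeasure μ₂]
    (a₁ b₁ a₂ b₂ : ℝ) (hab₁ : a₁ < b₁) (hgap : b₁ ≤ a₂) (hab₂ : a₂ < b₂)
    (hsupp₁ : μ₁ (Set.Icc a₁ b₁)ᶜ = 0) (hsupp₂ : μ₂ (Set.Icc a₂ b₂)ᶜ = 0)
    (hinf₁ : ∀ s : Finset ℝ, μ₁ ((s : Set ℝ))ᶜ ≠ 0)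
    (hinf₂ : ∀ s : Finset ℝ, μ₂ ((s : Set ℝ))ᶜ ≠ 0)
    (hmom₁ : ∀ k : ℕ, Integrable (fun t : ℝ => t ^ k) μ₁)
    (hmom₂ : ∀ k : ℕ, Integrable (fun t : ℝ => t ^ k) μ₂)
    (hgaplt : b₁ < a₂)
    (n : ℕ) (hn : 1 ≤ n) (ad : Angelesco μ₁ μ₂ a₁ b₁ a₂ b₂ n)
    (j : Fin (2 * n)) (hj : n ≤ (j : ℕ)) :
    (∫ t in Set.Icc a₁ b₁, (pnfun ad t) ^ 2 * qnfun ad t ∂μ₁) /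
        ((b₂ - a₁) * (pnfun ad (ad.x j)) ^ 2)
      ≤ |qweight ad μ₁ j| * |deriv (qnfun ad) (ad.x j)| ∧
    |qweight ad μ₁ j| * |deriv (qnfun ad) (ad.x j)|
      ≤ (∫ t in Set.Icc a₁ b₁, (pnfun ad t) ^ 2 * qnfun ad t ∂μ₁) /
          ((a₂ - b₁) * (pnfun ad (ad.x j)) ^ 2) := by
  classical
  set y := ad.x j with hy
  have hyI : y ∈ Set.Ioo a₂ b₂ := ad.mem2 j hj
  set A := Finset.univ.filter (fun i : Fin (2 * n) => (i : ℕ) < n) with hA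
  set B := Finset.univ.filter (fun i : Fin (2 * n) => n ≤ (i : ℕ)) with hB
  have hjB : j ∈ B := by simp [hB, hj]
  have hAcard : A.card ≤ n := by
    have h1 : A.image (fun i : Fin (2 * n) => (i : ℕ)) ⊆ Finset.range n := by
      intro k hk
      simp only [hA, Finset.mem_image, Finset.mem_filter, Finset.mem_univ, true_and] at hk
      obtain ⟨i, hi, rfl⟩ := hk
      simpa using hi
    have h2 := Finset.card_le_card h1
    rwa [Finset.card_image_of_injective _ Fin.val_injective, Finset.card_range] at h2
  let p : Polynomial ℝ := ∏ i ∈ A, (Polynomial.X - Polynomial.C (ad.x i))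
  let R : Polynomial ℝ := ∏ i ∈ B.erase j, (Polynomial.C (ad.x i) - Polynomial.X)
  have hpe : ∀ t, pnfun ad t = p.eval t := by
    intro t; simp [pnfun, p, Polynomial.eval_prod, hA]
  have hRe : ∀ t, R.eval t = ∏ i ∈ B.erase j, (ad.x i - t) := by
    intro t; simp [R, Polynomial.eval_prod]
  have hqe : ∀ t, qnfun ad t = (y - t) * R.eval t := by
    intro t
    rw [hRe]
    exact (Finset.mul_prod_erase B (fun i => ad.x i - t) hjB).symm
  have hder : deriv (qnfun ad) y = - R.eval y := by
    have h0 : qnfun ad = fun t => ((Polynomial.C y - Polynomial.X) * R).eval t := by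
      funext t; rw [hqe]; simp
    rw [h0, Polynomial.deriv]
    simp
  have hpy : 0 < p.eval y := by
    rw [← hpe]
    apply Finset.prod_pos
    intro i hi
    have hi' : (i : ℕ) < n := by simpa using hi
    have := (ad.mem1 i hi').2
    have := hyI.1
    linarith
  have hRy : R.eval y ≠ 0 := by
    rw [hRe, Finset.prod_ne_zero_iff]
    intro i hi
    rw [sub_ne_zero]
    exact fun h => (Finset.ne_of_mem_erase hi) (ad.mono.injective h)
  have hRpos : ∀ t ∈ Set.Icc a₁ b₁, 0 ≤ R.eval t := by
    intro t ht
    rw [hRe]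
    apply Finset.prod_nonneg
    intro i hi
    have hi' : n ≤ (i : ℕ) := by simpa [hB] using Finset.mem_of_mem_erase hi
    have := (ad.mem2 i hi').1
    have := ht.2
    linarith
  have hBnot : Finset.univ.filter (fun i : Fin (2 * n) => ¬ (i : ℕ) < n) = B := by
    ext i; simp [hB]
  obtain ⟨c, hc, hcR⟩ : ∃ c : ℝ, c ≠ 0 ∧
      ∀ t, ∏ i ∈ B.erase j, (t - ad.x i) = c * R.eval t := by
    refine ⟨(-1) ^ (B.erase j).card, by simp, fun t => ?_⟩
    rw [hRe, ← Finset.prod_const, ← Finset.prod_mul_distrib]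
    exact Finset.prod_congr rfl (fun i _ => by ring)
  have hP : ∀ t, ∏ i, (t - ad.x i) = p.eval t * ((t - y) * (c * R.eval t)) := by
    intro t
    rw [← Finset.prod_filter_mul_prod_filter_not Finset.univ
      (fun i : Fin (2 * n) => (i : ℕ) < n), hBnot, ← hcR,
      Finset.mul_prod_erase B (fun i => t - ad.x i) hjB, ← hpe]
    rfl
  have hErase : ∀ t, ∏ i ∈ Finset.univ.erase j, (t - ad.x i) = p.eval t * (c * R.eval t) := by
    intro t
    have h1 : Finset.univ.erase j = A ∪ B.erase j := by
      ext i
      simp only [hA, hB, Finset.mem_erase, Finset.mem_univ, and_true, Finset.mem_union,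
        Finset.mem_filter, true_and]
      constructor
      · intro h
        by_cases h' : (i : ℕ) < n
        · exact Or.inl h'
        · exact Or.inr ⟨h, by omega⟩
      · rintro (h | h)
        · rintro rfl; omega
        · exact h.1
    have h2 : Disjoint A (B.erase j) := by
      rw [Finset.disjoint_left]
      intro i hi hi'
      have h3 : (i : ℕ) < n := by simpa [hA] using hi
      have h4 : n ≤ (i : ℕ) := by simpa [hB] using Finset.mem_of_mem_erase hi'
      omega
    rw [h1, Finset.prod_union h2, hcR, ← hpe]
    rfl
  have hbasis : ∀ t, (Lagrange.basis Finset.univ ad.x j).eval t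
      = (p.eval y * R.eval y)⁻¹ * (p.eval t * R.eval t) := by
    intro t
    have h1 : (Lagrange.basis Finset.univ ad.x j).eval t
        = (∏ i ∈ Finset.univ.erase j, (y - ad.x i))⁻¹ *
          ∏ i ∈ Finset.univ.erase j, (t - ad.x i) := by
      simp only [Lagrange.basis, Lagrange.basisDivisor, Polynomial.eval_prod]
      simp [Finset.prod_mul_distrib, Finset.prod_inv_distrib, hy]
    rw [h1, hErase, hErase]
    have := hpy.ne'
    field_simp
  -- orthogonality
  have horth : ∫ t, p.eval t * R.eval t * (p.eval t - p.eval y) ∂μ₁ = 0 := by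
    set r := p /ₘ (Polynomial.X - Polynomial.C y) with hr
    have hpd : p.natDegree = A.card := by
      simp [p, Polynomial.natDegree_finsetProd_X_sub_C_eq_card]
    have hrd : r.natDegree < n := by
      rw [hr, Polynomial.natDegree_divByMonic _ (Polynomial.monic_X_sub_C y),
        Polynomial.natDegree_X_sub_C, hpd]
      omega
    have hrt : ∀ t, p.eval t - p.eval y = (t - y) * r.eval t := by
      intro t
      have h := Polynomial.modByMonic_add_div p (Polynomial.X - Polynomial.C y)
      rw [Polynomial.modByMonic_X_sub_C_eq_C_eval] at h
      have h2 := congrArg (Polynomial.eval t) h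
      simp only [Polynomial.eval_add, Polynomial.eval_mul, Polynomial.eval_sub,
        Polynomial.eval_X, Polynomial.eval_C] at h2
      rw [hr]; linarith
    let P : Polynomial ℝ := p * ((Polynomial.X - Polynomial.C y) * (Polynomial.C c * R))
    have hPe : ∀ t, P.eval t = ∏ i, (t - ad.x i) := by
      intro t; rw [hP]; simp [P]
    have h := orth_poly_aux μ₁ hmom₁ P r n hrd (by
      intro k hk
      simp only [hPe]
      exact ad.orth1 k hk)
    have h3 : ∀ t, P.eval t * r.eval t = c * (p.eval t * R.eval t * (p.eval t - p.eval y)) := by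
      intro t; rw [hrt, hPe, hP]; ring
    simp only [h3] at h
    rw [integral_const_mul] at h
    exact (mul_eq_zero.1 h).resolve_left hc
  have hi1 : Integrable (fun t => p.eval t ^ 2 * R.eval t) μ₁ := by
    simpa only [Polynomial.eval_mul, pow_two, Polynomial.eval_sub, Polynomial.eval_C,
      Polynomial.eval_X] using integrable_poly_aux μ₁ hmom₁ (p * p * R)
  have hi2 : Integrable (fun t => p.eval t * R.eval t) μ₁ := by
    simpa only [Polynomial.eval_mul, pow_two, Polynomial.eval_sub, Polynomial.eval_C,
      Polynomial.eval_X] using integrable_poly_aux μ₁ hmom₁ (p * R)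
  have hi3 : Integrable (fun t => p.eval t ^ 2 * ((y - t) * R.eval t)) μ₁ := by
    refine (integrable_poly_aux μ₁ hmom₁
      (p * p * ((Polynomial.C y - Polynomial.X) * R))).congr (Filter.Eventually.of_forall ?_)
    intro t
    show Polynomial.eval t (p * p * ((Polynomial.C y - Polynomial.X) * R)) = _
    rw [Polynomial.eval_mul, Polynomial.eval_mul, Polynomial.eval_mul, Polynomial.eval_sub,
      Polynomial.eval_C, Polynomial.eval_X]
    ring
  have hJ : ∫ t, p.eval t * R.eval t ∂μ₁ = (p.eval y)⁻¹ * ∫ t, p.eval t ^ 2 * R.eval t ∂μ₁ := by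
    have h4 : ∀ t, p.eval t * R.eval t * (p.eval t - p.eval y)
        = p.eval t ^ 2 * R.eval t - p.eval y * (p.eval t * R.eval t) := by
      intro t; ring
    simp only [h4] at horth
    rw [integral_sub hi1 (hi2.const_mul _), integral_const_mul] at horth
    rw [eq_inv_mul_iff_mul_eq₀ hpy.ne']
    linarith
  have hae : ∀ᵐ t ∂μ₁, t ∈ Set.Icc a₁ b₁ := by
    rw [ae_iff]; exact hsupp₁
  rw [Measure.restrict_eq_self_of_ae_mem hae]
  simp only [hpe, hqe]
  rw [hder, abs_neg]
  set J := ∫ t, p.eval t ^ 2 * R.eval t ∂μ₁ with hJdef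
  have hJ0 : 0 ≤ J := by
    apply integral_nonneg_of_ae
    filter_upwards [hae] with t ht
    exact mul_nonneg (sq_nonneg _) (hRpos t ht)
  have hw : |qweight ad μ₁ j| * |R.eval y| = J / p.eval y ^ 2 := by
    have h5 : qweight ad μ₁ j = (p.eval y * R.eval y)⁻¹ * ((p.eval y)⁻¹ * J) := by
      unfold qweight
      simp only [hbasis]
      rw [integral_const_mul, hJ]
    rw [← abs_mul, h5]
    have h6 : (p.eval y * R.eval y)⁻¹ * ((p.eval y)⁻¹ * J) * R.eval y = J / p.eval y ^ 2 := by
      have := hpy.ne'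
      field_simp
    rw [h6, abs_of_nonneg (by positivity)]
  rw [hw]
  set I := ∫ t, p.eval t ^ 2 * ((y - t) * R.eval t) ∂μ₁ with hI
  have hlow : (a₂ - b₁) * J ≤ I := by
    rw [hJdef, ← integral_const_mul]
    apply integral_mono_ae (hi1.const_mul _) hi3
    filter_upwards [hae] with t ht
    have h7 := mul_nonneg (sq_nonneg (p.eval t)) (hRpos t ht)
    have h8 : a₂ - b₁ ≤ y - t := by linarith [hyI.1, ht.2]
    have := mul_le_mul_of_nonneg_right h8 h7
    linarith
  have hup : I ≤ (b₂ - a₁) * J := by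
    rw [hJdef, ← integral_const_mul]
    apply integral_mono_ae hi3 (hi1.const_mul _)
    filter_upwards [hae] with t ht
    have h7 := mul_nonneg (sq_nonneg (p.eval t)) (hRpos t ht)
    have h8 : y - t ≤ b₂ - a₁ := by linarith [hyI.2, ht.1]
    have := mul_le_mul_of_nonneg_right h8 h7
    linarith
  have hd1 : 0 < b₂ - a₁ := by linarith
  have hd2 : 0 < a₂ - b₁ := by linarith
  have hp2 : 0 < p.eval y ^ 2 := by positivity
  rw [← div_div, ← div_div]
  constructor
  · gcongr
    rw [div_le_iff₀ hd1]; linarith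
  · gcongr
    rw [le_div_iff₀ hd2]; linarith
end

section
/- For every n ≥ 1 and every 1 ≤ j ≤ n, one has λ_{n+j,2n}^{(2)} · pₙ(x_{n+j,2n}) · (qₙ′(x_{n+j,2n}))² ≥ (b₂ − a₂)^{−2} ∫_{[a₂,b₂]} qₙ(x)² pₙ(x) dμ₂(x). -/
open MeasureTheory

/-- The integral of a polynomial multiple of the nodal polynomial vanishes. -/
lemma orth_poly_aux_s17 {m : ℕ} (μ : Measure ℝ) (hmom : ∀ k : ℕ, Integrable (fun t : ℝ => t ^ k) μ)
    (P S : Polynomial ℝ) (hS : S.natDegree < m)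
    (ho : ∀ k < m, ∫ t, P.eval t * t ^ k ∂μ = 0) :
    ∫ t, P.eval t * S.eval t ∂μ = 0 := by
  have hint : ∀ Q : Polynomial ℝ, Integrable (fun t => Q.eval t) μ := by
    intro Q
    simp only [Polynomial.eval_eq_sum_range]
    exact integrable_finset_sum _ fun i _ => (hmom i).const_mul _
  have : ∀ t, P.eval t * S.eval t
      = ∑ i ∈ Finset.range (S.natDegree + 1), S.coeff i * (P.eval t * t ^ i) := by
    intro t
    rw [Polynomial.eval_eq_sum_range (p := S), Finset.mul_sum]
    exact Finset.sum_congr rfl fun i _ => by ring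
  simp only [this]
  rw [integral_finset_sum]
  · refine Finset.sum_eq_zero fun i hi => ?_
    rw [integral_const_mul, ho i (by have := Finset.mem_range.1 hi; omega), mul_zero]
  · intro i _
    refine Integrable.const_mul ?_ _
    have := hint (P * Polynomial.X ^ i)
    simpa using this

/-- **Lower bound for the positive weights of the second rule:** for `1 ≤ j ≤ n`,
`λ_{n+j,2n}^{(2)} pₙ(x_{n+j,2n}) qₙ′(x_{n+j,2n})² ≥ (b₂−a₂)⁻² ∫_{[a₂,b₂]} qₙ² pₙ dμ₂`. -/
theorem angelesco_second_rule_weight_lower_bound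
    (μ₁ μ₂ : Measure ℝ) [IsFiniteMeasure μ₁] [IsFiniteMeasure μ₂]
    (a₁ b₁ a₂ b₂ : ℝ) (hab₁ : a₁ < b₁) (hgap : b₁ ≤ a₂) (hab₂ : a₂ < b₂)
    (hsupp₁ : μ₁ (Set.Icc a₁ b₁)ᶜ = 0) (hsupp₂ : μ₂ (Set.Icc a₂ b₂)ᶜ = 0)
    (hinf₁ : ∀ s : Finset ℝ, μ₁ ((s : Set ℝ))ᶜ ≠ 0)
    (hinf₂ : ∀ s : Finset ℝ, μ₂ ((s : Set ℝ))ᶜ ≠ 0)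
    (hmom₁ : ∀ k : ℕ, Integrable (fun t : ℝ => t ^ k) μ₁)
    (hmom₂ : ∀ k : ℕ, Integrable (fun t : ℝ => t ^ k) μ₂)
    (n : ℕ) (hn : 1 ≤ n) (ad : Angelesco μ₁ μ₂ a₁ b₁ a₂ b₂ n)
    (j : Fin (2 * n)) (hj : n ≤ (j : ℕ)) :
    ((b₂ - a₂) ^ 2)⁻¹ * ∫ t in Set.Icc a₂ b₂, (qnfun ad t) ^ 2 * pnfun ad t ∂μ₂
      ≤ qweight ad μ₂ j * pnfun ad (ad.x j) * (deriv (qnfun ad) (ad.x j)) ^ 2 := by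
  classical
  have hint : ∀ Q : Polynomial ℝ, Integrable (fun t => Q.eval t) μ₂ := by
    intro Q
    simp only [Polynomial.eval_eq_sum_range]
    exact integrable_finset_sum _ fun i _ => (hmom₂ i).const_mul _
  set A : Finset (Fin (2 * n)) := Finset.univ.filter (fun i => (i : ℕ) < n) with hA
  set B : Finset (Fin (2 * n)) := Finset.univ.filter (fun i => n ≤ (i : ℕ)) with hB
  have hjB : j ∈ B := by simp [hB, hj]
  have hAc : A.card ≤ n := by
    have := Finset.card_le_card_of_injOn (s := A) (t := Finset.range n) (fun i => (i : ℕ))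
      (by intro i hi; simpa [hA] using hi) (by intro i _ k _ h; exact Fin.ext h)
    simpa using this
  have hBc : B.card ≤ n := by
    have := Finset.card_le_card_of_injOn (s := B) (t := Finset.range n) (fun i => (i : ℕ) - n)
      (by
        intro i hi
        have h1 : n ≤ (i : ℕ) := by simpa [hB] using hi
        have := i.2
        simp only [Finset.coe_range, Set.mem_Iio]
        omega)
      (by
        intro i hi k hk h
        have h1 : n ≤ (i : ℕ) := by simpa [hB] using hi
        have h2 : n ≤ (k : ℕ) := by simpa [hB] using hk
        apply Fin.ext
        dsimp only at h
        omega)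
    simpa using this
  have hEc : (B.erase j).card + 1 ≤ n := by
    rw [Finset.card_erase_add_one hjB]; exact hBc
  let p : Polynomial ℝ := ∏ i ∈ A, (Polynomial.X - Polynomial.C (ad.x i))
  let r : Polynomial ℝ := ∏ i ∈ B.erase j, (Polynomial.C (ad.x i) - Polynomial.X)
  have hp : ∀ t, pnfun ad t = p.eval t := by
    intro t; simp [p, pnfun, Polynomial.eval_prod, hA]
  have hq : ∀ t, qnfun ad t = (ad.x j - t) * r.eval t := by
    intro t
    simp only [r, qnfun, Polynomial.eval_prod, Polynomial.eval_sub, Polynomial.eval_C,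
      Polynomial.eval_X]
    rw [Finset.mul_prod_erase B (fun i => ad.x i - t) hjB]
  have hd : deriv (qnfun ad) (ad.x j) = - r.eval (ad.x j) := by
    have h1 : qnfun ad = fun t => (ad.x j - t) * r.eval t := funext hq
    rw [h1]
    have h2 := ((hasDerivAt_id (ad.x j)).const_sub (ad.x j)).mul (r.hasDerivAt (ad.x j))
    have h3 := h2.deriv
    simp only [id, sub_self, zero_mul, add_zero, neg_mul, one_mul] at h3
    exact h3
  have hpd : p.natDegree ≤ n := by
    refine (Polynomial.natDegree_prod_le _ _).trans ?_
    simpa using hAc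
  have hrd : r.natDegree + 1 ≤ n := by
    refine le_trans (Nat.add_le_add_right ((Polynomial.natDegree_prod_le _ _).trans
      (Finset.sum_le_card_nsmul _ _ 1 ?_)) 1) (by simpa using hEc)
    intro i _
    compute_degree
  let R : Polynomial ℝ := r ^ 2 * p
  have hRd : R.natDegree + 2 ≤ 3 * n := by
    have h1 : R.natDegree ≤ (r ^ 2).natDegree + p.natDegree := Polynomial.natDegree_mul_le
    have h2 : (r ^ 2).natDegree ≤ 2 * r.natDegree := Polynomial.natDegree_pow_le
    omega
  let L := Lagrange.basis Finset.univ ad.x j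
  let N : Polynomial ℝ := ∏ i, (Polynomial.X - Polynomial.C (ad.x i))
  have hinj : Function.Injective ad.x := ad.mono.injective
  have hLd : L.natDegree ≤ 2 * n - 1 := by
    have := Lagrange.degree_basis (hinj.injOn (s := ((Finset.univ : Finset (Fin (2*n))) : Set (Fin (2 * n))))) (Finset.mem_univ j)
    have h2 := Polynomial.natDegree_eq_of_degree_eq_some this
    simp at h2
    exact h2.le
  let D : Polynomial ℝ := R - Polynomial.C (R.eval (ad.x j)) * L
  have hDd : D.natDegree + 1 ≤ 3 * n := by
    have h1 : D.natDegree ≤ max R.natDegree (Polynomial.C (R.eval (ad.x j)) * L).natDegree :=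
      Polynomial.natDegree_sub_le _ _
    have h2 := Polynomial.natDegree_C_mul_le (R.eval (ad.x j)) L
    omega
  have hNm : N.Monic := Polynomial.monic_prod_of_monic _ _ fun i _ => Polynomial.monic_X_sub_C _
  have hNd : N.natDegree = 2 * n := by
    simp [N]
  have hRz : ∀ i, i ≠ j → R.eval (ad.x i) = 0 := by
    intro i hij
    by_cases hi : (i : ℕ) < n
    · have : p.eval (ad.x i) = 0 := by
        simp only [p, Polynomial.eval_prod]
        exact Finset.prod_eq_zero (i := i) (by simp [hA, hi]) (by simp)
      simp [R, this]
    · have : r.eval (ad.x i) = 0 := by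
        simp only [r, Polynomial.eval_prod]
        exact Finset.prod_eq_zero (i := i)
          (Finset.mem_erase.2 ⟨hij, by simp [hB]; omega⟩) (by simp)
      simp [R, this]
  have hND : N ∣ D := by
    refine Finset.prod_dvd_of_coprime ?_ ?_
    · intro i _ k _ hik
      exact Polynomial.pairwise_coprime_X_sub_C hinj hik
    · intro i _
      rw [Polynomial.dvd_iff_isRoot, Polynomial.IsRoot.def]
      by_cases hij : i = j
      · subst hij
        have : L.eval (ad.x i) = 1 := Lagrange.eval_basis_self hinj.injOn (Finset.mem_univ _)
        simp [D, this]
      · have : L.eval (ad.x i) = 0 :=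
          Lagrange.eval_basis_of_ne (Ne.symm hij) (Finset.mem_univ _)
        simp [D, this, hRz i hij]
  obtain ⟨S, hS⟩ := hND
  have hSd : S.natDegree < n := by
    by_cases hS0 : S = 0
    · subst hS0; rw [Polynomial.natDegree_zero]; omega
    · have := hNm.natDegree_mul' hS0
      rw [← hS, hNd] at this
      omega
  have hDint : ∫ t, D.eval t ∂μ₂ = 0 := by
    have := orth_poly_aux_s17 μ₂ hmom₂ N S hSd (by
      intro k hk
      have := ad.orth2 k hk
      simpa [N, Polynomial.eval_prod] using this)
    rw [hS]
    simpa using this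
  have hRint : ∫ t, R.eval t ∂μ₂ = qweight ad μ₂ j * R.eval (ad.x j) := by
    have h1 : ∀ t, R.eval t = D.eval t + R.eval (ad.x j) * L.eval t := by
      intro t; simp [D]
    have h2 : ∫ t, R.eval t ∂μ₂ = ∫ t, (D.eval t + R.eval (ad.x j) * L.eval t) ∂μ₂ :=
      integral_congr_ae (Filter.Eventually.of_forall h1)
    rw [h2, integral_add (hint D) ((hint L).const_mul _), hDint, integral_const_mul, zero_add,
      mul_comm]
    rfl
  have hRHS : qweight ad μ₂ j * pnfun ad (ad.x j) * (deriv (qnfun ad) (ad.x j)) ^ 2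
      = ∫ t, R.eval t ∂μ₂ := by
    rw [hRint, hp, hd]
    simp only [R, Polynomial.eval_mul, Polynomial.eval_pow]
    ring
  have hres : μ₂.restrict (Set.Icc a₂ b₂) = μ₂ :=
    Measure.restrict_eq_self_of_ae_mem (by rw [ae_iff]; exact hsupp₂)
  rw [hRHS, hres, ← integral_const_mul]
  have hae : ∀ᵐ t ∂μ₂, t ∈ Set.Icc a₂ b₂ := by rw [ae_iff]; exact hsupp₂
  refine integral_mono_ae ?_ (hint R) ?_
  · refine Integrable.const_mul ?_ _
    have := hint (((Polynomial.C (ad.x j) - Polynomial.X) * r) ^ 2 * p)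
    refine this.congr (Filter.Eventually.of_forall fun t => ?_)
    simp [hp, hq]
  · filter_upwards [hae] with t ht
    have hxj := ad.mem2 j hj
    have hpt : 0 ≤ p.eval t := by
      simp only [p, Polynomial.eval_prod]
      refine Finset.prod_nonneg fun i hi => ?_
      have := (ad.mem1 i (by simpa [hA] using hi)).2
      simp only [Polynomial.eval_sub, Polynomial.eval_X, Polynomial.eval_C]
      linarith [ht.1]
    have hRt : 0 ≤ R.eval t := by
      simp only [R, Polynomial.eval_mul, Polynomial.eval_pow]
      positivity
    have hb : 0 < (b₂ - a₂) ^ 2 := by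
      have : 0 < b₂ - a₂ := by linarith
      positivity
    have hsq : (ad.x j - t) ^ 2 ≤ (b₂ - a₂) ^ 2 := by
      apply sq_le_sq'
      · linarith [ht.1, ht.2, hxj.1, hxj.2]
      · linarith [ht.1, ht.2, hxj.1, hxj.2]
    rw [inv_mul_le_iff₀ hb, hp, hq]
    calc ((ad.x j - t) * r.eval t) ^ 2 * p.eval t = (ad.x j - t) ^ 2 * R.eval t := by
          simp only [R, Polynomial.eval_mul, Polynomial.eval_pow]; ring
      _ ≤ _ := mul_le_mul_of_nonneg_right hsq hRt
end

section
/- Let 0 < a < b, let ν₂ be a Borel probability measure with support contained in [a,b], and let ν₁ be its reflection, i.e. ν₁(E) = ν₂(−E) for Borel sets E, so that supp(ν₁) ⊆ [−b,−a]. Define the logarithmic potentials U(x;ν_i) = ∫ log(1/|x − y|) dν_i(y), and assume there is a constant ℓ ∈ ℝ such that U(x;ν₁) + 2U(x;ν₂) = ℓ for all x ∈ [a,b] (with both potentials finite there). Then for every x ∈ [a,b], 2U(x;ν₁) + U(x;ν₂) − ℓ ≤ U(a;ν₁) − U(a;ν₂), and U(a;ν₁) − U(a;ν₂) < 0. -/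
open MeasureTheory

/-- The logarithmic potential `U(x;ν) = ∫ log(1/|x − y|) dν(y)`. -/
noncomputable def logPot (ν : Measure ℝ) (x : ℝ) : ℝ :=
  ∫ y, Real.log (1 / |x - y|) ∂ν

/-- **Exponential smallness of `2U(·;ν₁) + U(·;ν₂) − ℓ` on the second interval in the
symmetric case.**  Let `0 < a < b`, let `ν₂` be a probability measure supported in
`[a,b]`, let `ν₁` be its reflection, and suppose the equilibrium condition
`U(x;ν₁) + 2U(x;ν₂) = ℓ` holds on `[a,b]` (with both potentials finite there).  Then
`2U(x;ν₁) + U(x;ν₂) − ℓ ≤ U(a;ν₁) − U(a;ν₂) < 0` for all `x ∈ [a,b]`. -/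
theorem symmetric_angelesco_potential_bound
    (a b : ℝ) (ha : 0 < a) (hab : a < b)
    (ν₂ : Measure ℝ) [IsProbabilityMeasure ν₂] (hsupp : ν₂ (Set.Icc a b)ᶜ = 0)
    (ν₁ : Measure ℝ) (hrefl : ν₁ = ν₂.map (fun y => -y))
    (hint : ∀ x ∈ Set.Icc a b,
      Integrable (fun y => Real.log (1 / |x - y|)) ν₁ ∧
      Integrable (fun y => Real.log (1 / |x - y|)) ν₂)
    (ℓ : ℝ) (heq : ∀ x ∈ Set.Icc a b, logPot ν₁ x + 2 * logPot ν₂ x = ℓ) :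
    (∀ x ∈ Set.Icc a b,
      2 * logPot ν₁ x + logPot ν₂ x - ℓ ≤ logPot ν₁ a - logPot ν₂ a) ∧
    logPot ν₁ a - logPot ν₂ a < 0 := by
  have hae : ∀ᵐ y ∂ν₂, y ∈ Set.Icc a b := by
    rw [ae_iff]; exact hsupp
  have hem : MeasurableEmbedding (fun y : ℝ => -y) := (MeasurableEquiv.neg ℝ).measurableEmbedding
  have hU1 : ∀ x, logPot ν₁ x = ∫ y, Real.log (1 / |x + y|) ∂ν₂ := by
    intro x
    unfold logPot
    rw [hrefl, hem.integral_map]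
    simp only [sub_neg_eq_add]
  have hi1 : ∀ x ∈ Set.Icc a b, Integrable (fun y => Real.log (1 / |x + y|)) ν₂ := by
    intro x hx
    have h := (hint x hx).1
    rw [hrefl, hem.integrable_map_iff] at h
    simpa only [Function.comp_def, sub_neg_eq_add] using h
  have hmono : ∀ x ∈ Set.Icc a b, ∀ z ∈ Set.Icc a b, x ≤ z → logPot ν₁ z ≤ logPot ν₁ x := by
    intro x hx z hz hxz
    rw [hU1, hU1]
    refine integral_mono_ae (hi1 z hz) (hi1 x hx) ?_
    filter_upwards [hae] with y hy
    have h1 : 0 < x + y := by linarith [hx.1, hy.1]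
    have h2 : 0 < z + y := by linarith
    rw [abs_of_pos h1, abs_of_pos h2]
    apply Real.log_le_log (by positivity)
    apply one_div_le_one_div_of_le h1
    linarith
  have haI : a ∈ Set.Icc a b := ⟨le_rfl, hab.le⟩
  have hbI : b ∈ Set.Icc a b := ⟨hab.le, le_rfl⟩
  refine ⟨fun x hx => ?_, ?_⟩
  · have h1 := heq x hx
    have h2 := heq a haI
    have h3 := hmono a haI x hx hx.1
    linarith
  -- no atom at `a`
  have hatom : ν₂.real {a} = 0 := by
    by_contra hm0
    have hm : 0 < ν₂.real {a} := lt_of_le_of_ne measureReal_nonneg (Ne.symm hm0)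
    set m := ν₂.real {a} with hmdef
    set C := |Real.log (b - a)| with hC
    have hC0 : 0 ≤ C := abs_nonneg _
    set K := (ℓ - logPot ν₁ b) / 2 with hK
    have key : ∀ t, 0 < t → t ≤ b - a → -C - m * Real.log t ≤ K := by
      intro t ht htb
      have hx : a + t ∈ Set.Icc a b := ⟨by linarith, by linarith⟩
      have h1 := heq _ hx
      have h2 := hmono _ hx b hbI hx.2
      have h3 : -C - m * Real.log t ≤ logPot ν₂ (a + t) := by
        have hii : Integrable (({a} : Set ℝ).indicator (fun _ => - Real.log t)) ν₂ :=
          (integrable_const _).indicator (measurableSet_singleton a)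
        have h4 : ∫ y, (-C + ({a} : Set ℝ).indicator (fun _ => - Real.log t) y) ∂ν₂
            = -C - m * Real.log t := by
          rw [integral_add (integrable_const _) hii,
            integral_indicator_const _ (measurableSet_singleton a)]
          simp [hmdef]
          ring
        rw [← h4]
        refine integral_mono_ae ((integrable_const _).add hii) (hint _ hx).2 ?_
        filter_upwards [hae] with y hy
        rw [one_div, Real.log_inv]
        by_cases hya : y = a
        · subst hya
          simp [hC0]
        · have : y ∉ ({a} : Set ℝ) := hya
          rw [Set.indicator_of_notMem this]
          by_cases hyx : a + t - y = 0
          · rw [hyx]; simp [hC0]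
          · have hp : 0 < |a + t - y| := abs_pos.mpr hyx
            have hle : |a + t - y| ≤ b - a := by
              rw [abs_le]; constructor <;> linarith [hy.1, hy.2]
            have := Real.log_le_log hp hle
            have := le_abs_self (Real.log (b - a))
            linarith
      linarith
    set s := (|K| + C + m * C + 1) / m with hs
    have hs0 : 0 ≤ s := by positivity
    have hba : 0 < b - a := by linarith
    have h := key ((b - a) * Real.exp (-s)) (by positivity) (by
      have : Real.exp (-s) ≤ 1 := Real.exp_le_one_iff.mpr (by linarith)
      nlinarith)
    rw [Real.log_mul hba.ne' (Real.exp_pos _).ne', Real.log_exp] at h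
    have hms : m * s = |K| + C + m * C + 1 := by rw [hs]; field_simp
    have h5 : m * Real.log (b - a) ≤ m * C :=
      mul_le_mul_of_nonneg_left (le_abs_self _) hm.le
    have h6 := le_abs_self K
    nlinarith
  have hne : ∀ᵐ y ∂ν₂, y ≠ a := by
    have h0 : ν₂ {a} = 0 := by
      rwa [measureReal_eq_zero_iff] at hatom
    rw [ae_iff]
    simpa using h0
  have hpos : ∀ᵐ y ∂ν₂, 0 < Real.log (1 / |a - y|) - Real.log (1 / |a + y|) := by
    filter_upwards [hae, hne] with y hy hya
    have hp : 0 < |a - y| := abs_pos.mpr (sub_ne_zero.mpr (Ne.symm hya))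
    have h1 : 0 < a + y := by linarith [hy.1]
    have h2 : |a - y| < |a + y| := by
      rw [abs_of_pos h1, abs_lt]; constructor <;> linarith [hy.1]
    rw [one_div, one_div, Real.log_inv, Real.log_inv]
    have := Real.log_lt_log hp h2
    linarith
  have hI := (hint a haI).2.sub (hi1 a haI)
  have hfin : 0 < ∫ y, (Real.log (1 / |a - y|) - Real.log (1 / |a + y|)) ∂ν₂ := by
    have h0 : 0 ≤ᵐ[ν₂] fun y => Real.log (1 / |a - y|) - Real.log (1 / |a + y|) := by
      filter_upwards [hpos] with y hy using hy.le
    refine lt_of_le_of_ne (integral_nonneg_of_ae h0) fun h => ?_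
    have hz := (integral_eq_zero_iff_of_nonneg_ae h0 hI).mp h.symm
    have hF : ∀ᵐ y ∂ν₂, False := by
      filter_upwards [hz, hpos] with y h1 h2
      simp only [Pi.zero_apply] at h1
      linarith
    exact hF.exists.elim fun _ h => h
  rw [integral_sub (hint a haI).2 (hi1 a haI), ← hU1] at hfin
  change 0 < logPot ν₂ a - logPot ν₁ a at hfin
  linarith
end

section
/- Let D be a closed disc in ℂ whose interior contains the segment [a₁,b₂] of the real axis, let Γ be its boundary circle, and let f be a complex-differentiable function on an open set containing D. Suppose that sup_{z ∈ Γ} | ∑_{j=1}^{2n} λ_{j,2n}^{(1)} / (z − x_{j,2n}) − ∫ (z − x)^{−1} dμ₁(x) | → 0 as n → ∞. Then the first quadrature rule converges for f: lim_{n→∞} ∑_{j=1}^{2n} λ_{j,2n}^{(1)} f(x_{j,2n}) = ∫ f(x) dμ₁(x). -/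
open MeasureTheory

/-- **Convergence of the first quadrature rule for analytic functions** (Theorem 3.4).
Let `D` be a closed disc whose interior contains the segment `[a₁,b₂]` of the real
axis, with boundary circle `Γ`, and let `f` be complex-differentiable on an open set
containing `D`.  If the Hermite–Padé approximants
`∑_{j=1}^{2n} λ_{j,2n}^{(1)}/(z − x_{j,2n})` converge uniformly on `Γ` to the Cauchy
transform `∫ (z − x)⁻¹ dμ₁(x)`, then
`∑_{j=1}^{2n} λ_{j,2n}^{(1)} f(x_{j,2n}) → ∫ f dμ₁`. -/
theorem angelesco_quadrature_convergence_analytic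
    (μ₁ μ₂ : Measure ℝ) [IsFiniteMeasure μ₁] [IsFiniteMeasure μ₂]
    (a₁ b₁ a₂ b₂ : ℝ) (hab₁ : a₁ < b₁) (hgap : b₁ ≤ a₂) (hab₂ : a₂ < b₂)
    (hsupp₁ : μ₁ (Set.Icc a₁ b₁)ᶜ = 0) (hsupp₂ : μ₂ (Set.Icc a₂ b₂)ᶜ = 0)
    (hinf₁ : ∀ s : Finset ℝ, μ₁ ((s : Set ℝ))ᶜ ≠ 0)
    (hinf₂ : ∀ s : Finset ℝ, μ₂ ((s : Set ℝ))ᶜ ≠ 0)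
    (hmom₁ : ∀ k : ℕ, Integrable (fun t : ℝ => t ^ k) μ₁)
    (hmom₂ : ∀ k : ℕ, Integrable (fun t : ℝ => t ^ k) μ₂)
    (ad : ∀ n : ℕ, Angelesco μ₁ μ₂ a₁ b₁ a₂ b₂ n)
    (z₀ : ℂ) (r : ℝ) (hr : 0 < r)
    (hseg : (fun x : ℝ => (x : ℂ)) '' Set.Icc a₁ b₂ ⊆ Metric.ball z₀ r)
    (f : ℂ → ℂ)
    (hf : ∃ U : Set ℂ, IsOpen U ∧ Metric.closedBall z₀ r ⊆ U ∧ DifferentiableOn ℂ f U)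
    (hconv : ∀ ε > (0 : ℝ), ∃ N : ℕ, ∀ n ≥ N, ∀ z ∈ Metric.sphere z₀ r,
      ‖(∑ j : Fin (2 * n), (qweight (ad n) μ₁ j : ℂ) / (z - ((ad n).x j : ℂ))) -
        ∫ x, (z - (x : ℂ))⁻¹ ∂μ₁‖ ≤ ε) :
    Filter.Tendsto
      (fun n : ℕ => ∑ j : Fin (2 * n), (qweight (ad n) μ₁ j : ℂ) * f (((ad n).x j : ℂ)))
      Filter.atTop (nhds (∫ x, f (x : ℂ) ∂μ₁)) := by
  obtain ⟨U, hU, hDU, hfU⟩ := hf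
  have hfd : DifferentiableOn ℂ f (Metric.closedBall z₀ r) := hfU.mono hDU
  have hfc : ContinuousOn f (Metric.sphere z₀ r) :=
    hfd.continuousOn.mono Metric.sphere_subset_closedBall
  have hball : ∀ x ∈ Set.Icc a₁ b₂, (x : ℂ) ∈ Metric.ball z₀ r := fun x hx =>
    hseg ⟨x, hx, rfl⟩
  have hcauchy : ∀ x ∈ Set.Icc a₁ b₂,
      (∮ z in C(z₀, r), (z - (x : ℂ))⁻¹ * f z) = (2 * Real.pi * Complex.I : ℂ) * f x := by
    intro x hx
    have := hfd.circleIntegral_sub_inv_smul (hball x hx)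
    simpa [smul_eq_mul] using this
  obtain ⟨M, hM⟩ : ∃ M, ∀ z ∈ Metric.sphere z₀ r, ‖f z‖ ≤ M :=
    (isCompact_sphere z₀ r).exists_bound_of_continuousOn hfc
  have hcs : ∀ θ, circleMap z₀ r θ ∈ Metric.sphere z₀ r := circleMap_mem_sphere z₀ hr.le
  have hM0 : 0 ≤ M := (norm_nonneg _).trans (hM _ (hcs 0))
  have hae : ∀ᵐ x ∂μ₁, x ∈ Set.Icc a₁ b₁ := hsupp₁
  have hae2 : ∀ᵐ x ∂μ₁, x ∈ Set.Icc a₁ b₂ :=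
    hae.mono fun x hx => ⟨hx.1, by linarith [hx.2]⟩
  -- lower bound for the distance to the circle
  obtain ⟨δ, hδ, hdist⟩ : ∃ δ > 0, ∀ x ∈ Set.Icc a₁ b₂, ∀ z ∈ Metric.sphere z₀ r,
      δ ≤ ‖z - (x : ℂ)‖ := by
    have hne : (Set.Icc a₁ b₂).Nonempty := ⟨a₁, le_refl _, by linarith⟩
    obtain ⟨y, hy, hmax⟩ := (isCompact_Icc (a := a₁) (b := b₂)).exists_isMaxOn hne
      (f := fun x : ℝ => dist (x : ℂ) z₀) (by fun_prop)
    refine ⟨r - dist (y : ℂ) z₀, sub_pos.2 (hball y hy), fun x hx z hz => ?_⟩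
    have h1 : dist (x : ℂ) z₀ ≤ dist (y : ℂ) z₀ := hmax hx
    have h2 : dist z z₀ = r := hz
    have h3 := dist_triangle z (x : ℂ) z₀
    rw [← dist_eq_norm]
    linarith
  have hfcirc : Continuous fun θ => f (circleMap z₀ r θ) :=
    hfc.comp_continuous (continuous_circleMap _ _) hcs
  -- Fubini
  have hint : Integrable (Function.uncurry fun (θ : ℝ) (x : ℝ) =>
      deriv (circleMap z₀ r) θ • ((circleMap z₀ r θ - (x : ℂ))⁻¹ * f (circleMap z₀ r θ)))
      ((volume.restrict (Set.uIoc 0 (2 * Real.pi))).prod μ₁) := by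
    have : IsFiniteMeasure (volume.restrict (Set.uIoc 0 (2 * Real.pi))) :=
      ⟨by simp [Set.uIoc]⟩
    refine Integrable.of_bound (C := r * (δ⁻¹ * M)) ?_ ?_
    · apply Measurable.aestronglyMeasurable
      simp only [Function.uncurry_def, deriv_circleMap, smul_eq_mul]
      have h1 : Measurable fun p : ℝ × ℝ => f (circleMap z₀ r p.1) :=
        hfcirc.measurable.comp measurable_fst
      have h2 : Measurable fun p : ℝ × ℝ => circleMap 0 r p.1 :=
        (measurable_circleMap 0 r).comp measurable_fst
      have h3 : Measurable fun p : ℝ × ℝ => circleMap z₀ r p.1 :=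
        (measurable_circleMap z₀ r).comp measurable_fst
      have h4 : Measurable fun p : ℝ × ℝ => (p.2 : ℂ) :=
        Complex.measurable_ofReal.comp measurable_snd
      exact (h2.mul_const _).mul ((h3.sub h4).inv.mul h1)
    · have hq : ∀ᵐ p ∂((volume.restrict (Set.uIoc 0 (2 * Real.pi))).prod μ₁),
          p.2 ∈ Set.Icc a₁ b₂ := Measure.quasiMeasurePreserving_snd.ae hae2
      filter_upwards [hq] with p hp
      simp only [Function.uncurry_def, deriv_circleMap, smul_eq_mul, norm_mul, norm_inv,
        norm_circleMap_zero, Complex.norm_I, mul_one, abs_of_pos hr]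
      have h1 := hdist _ hp _ (hcs p.1)
      have h2 := hM _ (hcs p.1)
      gcongr
  have hswap : (∮ z in C(z₀, r), (∫ x, (z - (x : ℂ))⁻¹ ∂μ₁) * f z)
      = (2 * Real.pi * Complex.I : ℂ) * ∫ x, f (x : ℂ) ∂μ₁ := by
    have := intervalIntegral_integral_swap hint
    rw [← integral_const_mul]
    calc _ = ∫ θ in (0:ℝ)..2 * Real.pi, ∫ x, deriv (circleMap z₀ r) θ •
            ((circleMap z₀ r θ - (x : ℂ))⁻¹ * f (circleMap z₀ r θ)) ∂μ₁ := by
          simp only [circleIntegral, integral_smul, integral_mul_const]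
      _ = _ := this
      _ = _ := integral_congr_ae (hae2.mono fun x hx => hcauchy x hx)
  have hGint : CircleIntegrable (fun z => (∫ x, (z - (x : ℂ))⁻¹ ∂μ₁) * f z) z₀ r := by
    rw [circleIntegrable_iff, intervalIntegrable_iff, IntegrableOn]
    have := hint.integral_prod_left
    simpa only [Function.uncurry_def, integral_smul, integral_mul_const] using this
  have hmem : ∀ n j, (ad n).x j ∈ Set.Icc a₁ b₂ := by
    intro n j
    rcases lt_or_ge (j : ℕ) n with h | h
    · have := (ad n).mem1 j h
      exact ⟨this.1.le, by linarith [this.2]⟩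
    · have := (ad n).mem2 j h
      exact ⟨by linarith [this.1], this.2.le⟩
  have hterm : ∀ n, ∀ j, CircleIntegrable (fun z => (qweight (ad n) μ₁ j : ℂ) *
      ((z - ((ad n).x j : ℂ))⁻¹ * f z)) z₀ r := by
    intro n j
    refine ContinuousOn.circleIntegrable hr.le ?_
    refine continuousOn_const.mul (ContinuousOn.mul (ContinuousOn.inv₀ (by fun_prop) ?_) hfc)
    intro z hz
    exact norm_pos_iff.1 (hδ.trans_le (hdist _ (hmem n j) z hz))
  have hS : ∀ n (z : ℂ), (∑ j : Fin (2 * n), (qweight (ad n) μ₁ j : ℂ) /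
      (z - ((ad n).x j : ℂ))) * f z = ∑ j : Fin (2 * n), (qweight (ad n) μ₁ j : ℂ) *
      ((z - ((ad n).x j : ℂ))⁻¹ * f z) := by
    intro n z
    rw [Finset.sum_mul]
    exact Finset.sum_congr rfl fun j _ => by rw [div_eq_mul_inv, mul_assoc]
  have hsum : ∀ n, (∮ z in C(z₀, r), (∑ j : Fin (2 * n), (qweight (ad n) μ₁ j : ℂ) /
      (z - ((ad n).x j : ℂ))) * f z) = (2 * Real.pi * Complex.I : ℂ) *
      ∑ j : Fin (2 * n), (qweight (ad n) μ₁ j : ℂ) * f (((ad n).x j : ℂ)) := by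
    intro n
    simp only [hS]
    rw [circleIntegral.integral_fun_sum fun j _ => hterm n j, Finset.mul_sum]
    refine Finset.sum_congr rfl fun j _ => ?_
    rw [circleIntegral.integral_const_mul, hcauchy _ (hmem n j)]
    ring
  have hSint : ∀ n, CircleIntegrable (fun z => (∑ j : Fin (2 * n), (qweight (ad n) μ₁ j : ℂ) /
      (z - ((ad n).x j : ℂ))) * f z) z₀ r := by
    intro n
    simp only [hS]
    exact CircleIntegrable.fun_sum _ fun j _ => hterm n j
  have hne : (2 * Real.pi * Complex.I : ℂ) ≠ 0 := Complex.two_pi_I_ne_zero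
  rw [Metric.tendsto_atTop]
  intro ε hε
  obtain ⟨N, hN⟩ := hconv (ε / (2 * (r * (M + 1)))) (by positivity)
  refine ⟨N, fun n hn => ?_⟩
  have key : (∑ j : Fin (2 * n), (qweight (ad n) μ₁ j : ℂ) * f (((ad n).x j : ℂ)))
      - ∫ x, f (x : ℂ) ∂μ₁ = (2 * Real.pi * Complex.I : ℂ)⁻¹ • ∮ z in C(z₀, r),
      ((∑ j : Fin (2 * n), (qweight (ad n) μ₁ j : ℂ) / (z - ((ad n).x j : ℂ))) * f z -
        (∫ x, (z - (x : ℂ))⁻¹ ∂μ₁) * f z) := by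
    rw [circleIntegral.integral_sub (hSint n) hGint, hsum, hswap, ← mul_sub, smul_eq_mul,
      inv_mul_cancel_left₀ hne]
  rw [dist_eq_norm, key]
  calc _ ≤ r * (ε / (2 * (r * (M + 1))) * (M + 1)) := by
        refine circleIntegral.norm_two_pi_i_inv_smul_integral_le_of_norm_le_const hr.le ?_
        intro z hz
        rw [← sub_mul, norm_mul]
        have h1 := hN n hn z hz
        have h2 : ‖f z‖ ≤ M + 1 := (hM z hz).trans (by linarith)
        gcongr
    _ = ε / 2 := by field_simp
    _ < ε := by linarith
end
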